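/- For every K > 0 there exists a constant α > 0 depending only on K with the following property. For all positive integers n, m, d₁, d₂ with n·d₁ = m·d₂, d₁ ≥ d₂, d₂ ≤ (1/2)·n^{2/3}, and 𝒢(n,m,d₁,d₂) nonempty, if A is the adjacency matrix of a uniform random (n,m,d₁,d₂)-bipartite biregular graph, then ℙ(λ₂(A) ≤ α·√d₁) ≥ 1 − m^{−K} − e^{−m}, where λ₂(A) is the second largest eigenvalue of A (eigenvalues counted with multiplicity). -/

import Mathlib

open scoped Classical BigOperators

noncomputable section

/-- The set of biadjacency matrices of `(n,m,d₁,d₂)`-bipartite biregular graphs: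
0-1 matrices with all row sums `d₁` and all column sums `d₂`. -/
def BBG (n m d₁ d₂ : ℕ) : Finset (Fin n → Fin m → Bool) :=
  Finset.univ.filter fun X =>
    (∀ u, (∑ v, if X u v then 1 else 0) = d₁) ∧
    (∀ v, (∑ u, if X u v then 1 else 0) = d₂)

/-- The biadjacency matrix as a real matrix. -/
def biadj {n m : ℕ} (X : Fin n → Fin m → Bool) : Matrix (Fin n) (Fin m) ℝ :=
  Matrix.of fun u v => if X u v then (1 : ℝ) else 0

/-- The adjacency matrix `A = [[0, X],[Xᵀ,0]]` of the bipartite graph. -/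
def adj {n m : ℕ} (X : Fin n → Fin m → Bool) :
    Matrix (Fin n ⊕ Fin m) (Fin n ⊕ Fin m) ℝ :=
  Matrix.fromBlocks 0 (biadj X) (biadj X).transpose 0



/-- real indicator of an edge -/
def ind {n m : ℕ} (X : Fin n → Fin m → Bool) (u : Fin n) (v : Fin m) : ℝ :=
  if X u v then 1 else 0

/-- toggling the rectangle `{u,a} × {v,b}` -/
def sw {n m : ℕ} (u a : Fin n) (v b : Fin m) (X : Fin n → Fin m → Bool) :
    Fin n → Fin m → Bool :=
  fun i j => if (i = u ∨ i = a) ∧ (j = v ∨ j = b) then !(X i j) else X i j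

/-- valid switching -/
def Val {n m : ℕ} (u : Fin n) (v : Fin m) (a : Fin n) (b : Fin m)
    (X : Fin n → Fin m → Bool) : Prop :=
  X u v = true ∧ X a b = true ∧ X u b = false ∧ X a v = false

/-- real indicator of a valid switching -/
def vind {n m : ℕ} (u : Fin n) (v : Fin m) (a : Fin n) (b : Fin m)
    (X : Fin n → Fin m → Bool) : ℝ :=
  ind X u v * ind X a b * (1 - ind X u b) * (1 - ind X a v)

lemma ind_nonneg {n m : ℕ} (X : Fin n → Fin m → Bool) (u v) : 0 ≤ ind X u v := by
  unfold ind; split_ifs <;> norm_num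

lemma ind_le_one {n m : ℕ} (X : Fin n → Fin m → Bool) (u v) : ind X u v ≤ 1 := by
  unfold ind; split_ifs <;> norm_num

lemma ind_sq {n m : ℕ} (X : Fin n → Fin m → Bool) (u v) :
    ind X u v * ind X u v = ind X u v := by
  unfold ind; split_ifs <;> norm_num

lemma vind_eq {n m : ℕ} (u : Fin n) (v : Fin m) (a : Fin n) (b : Fin m)
    (X : Fin n → Fin m → Bool) : vind u v a b X = if Val u v a b X then 1 else 0 := by
  unfold vind Val ind
  cases X u v <;> cases X a b <;> cases X u b <;> cases X a v <;> simp

lemma vind_nonneg {n m : ℕ} (u : Fin n) (v : Fin m) (a : Fin n) (b : Fin m)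
    (X : Fin n → Fin m → Bool) : 0 ≤ vind u v a b X := by
  rw [vind_eq]; split_ifs <;> norm_num

lemma sw_sw {n m : ℕ} (u a : Fin n) (v b : Fin m) (X : Fin n → Fin m → Bool) :
    sw u a v b (sw u a v b X) = X := by
  funext i j
  unfold sw
  split_ifs <;> simp

lemma sw_comm {n m : ℕ} (u a : Fin n) (v b : Fin m) (X : Fin n → Fin m → Bool) :
    sw u a b v X = sw u a v b X := by
  funext i j
  unfold sw
  simp only [or_comm]

lemma Val.ne {n m : ℕ} {u : Fin n} {v : Fin m} {a : Fin n} {b : Fin m}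
    {X : Fin n → Fin m → Bool} (h : Val u v a b X) : u ≠ a ∧ v ≠ b := by
  obtain ⟨h1, h2, h3, h4⟩ := h
  constructor
  · rintro rfl; simp_all
  · rintro rfl; simp_all

lemma Val.sw {n m : ℕ} {u : Fin n} {v : Fin m} {a : Fin n} {b : Fin m}
    {X : Fin n → Fin m → Bool} (h : Val u v a b X) : Val u b a v (sw u a v b X) := by
  obtain ⟨h1, h2, h3, h4⟩ := h
  simp [Val, _root_.sw, h1, h2, h3, h4]

lemma mem_BBG {n m d₁ d₂ : ℕ} {X : Fin n → Fin m → Bool} :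
    X ∈ BBG n m d₁ d₂ ↔ (∀ u, ∑ v, ind X u v = d₁) ∧ (∀ v, ∑ u, ind X u v = d₂) := by
  unfold BBG ind
  simp only [Finset.mem_filter, Finset.mem_univ, true_and]
  refine and_congr (forall_congr' fun u => ?_) (forall_congr' fun v => ?_)
  · rw [← Nat.cast_inj (R := ℝ)]; push_cast; rfl
  · rw [← Nat.cast_inj (R := ℝ)]; push_cast; rfl

lemma sw_row {n m : ℕ} {u : Fin n} {v : Fin m} {a : Fin n} {b : Fin m}
    {X : Fin n → Fin m → Bool} (h : Val u v a b X) (i : Fin n) :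
    ∑ j, ind (sw u a v b X) i j = ∑ j, ind X i j := by
  by_cases hi : i = u ∨ i = a
  · rw [← Equiv.sum_comp (Equiv.swap v b) (fun j => ind X i j)]
    refine Finset.sum_congr rfl fun j _ => ?_
    obtain ⟨h1, h2, h3, h4⟩ := h
    by_cases hv : j = v
    · subst hv
      rcases hi with rfl | rfl <;> simp [ind, sw, h1, h2, h3, h4]
    by_cases hb : j = b
    · subst hb
      rcases hi with rfl | rfl <;> simp [ind, sw, h1, h2, h3, h4]
    · rw [Equiv.swap_apply_of_ne_of_ne hv hb]
      simp [ind, sw, hv, hb]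
  · refine Finset.sum_congr rfl fun j _ => ?_
    simp [ind, sw, hi]

lemma sw_col {n m : ℕ} {u : Fin n} {v : Fin m} {a : Fin n} {b : Fin m}
    {X : Fin n → Fin m → Bool} (h : Val u v a b X) (j : Fin m) :
    ∑ i, ind (sw u a v b X) i j = ∑ i, ind X i j := by
  by_cases hj : j = v ∨ j = b
  · rw [← Equiv.sum_comp (Equiv.swap u a) (fun i => ind X i j)]
    refine Finset.sum_congr rfl fun i _ => ?_
    obtain ⟨h1, h2, h3, h4⟩ := h
    by_cases hv : i = u
    · subst hv
      rcases hj with rfl | rfl <;> simp [ind, sw, h1, h2, h3, h4]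
    by_cases hb : i = a
    · subst hb
      rcases hj with rfl | rfl <;> simp [ind, sw, h1, h2, h3, h4]
    · rw [Equiv.swap_apply_of_ne_of_ne hv hb]
      simp [ind, sw, hv, hb]
  · refine Finset.sum_congr rfl fun i _ => ?_
    simp [ind, sw, hj]

lemma sw_mem {n m d₁ d₂ : ℕ} {u : Fin n} {v : Fin m} {a : Fin n} {b : Fin m}
    {X : Fin n → Fin m → Bool} (h : Val u v a b X) (hX : X ∈ BBG n m d₁ d₂) :
    sw u a v b X ∈ BBG n m d₁ d₂ := by
  rw [mem_BBG] at hX ⊢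
  exact ⟨fun i => by rw [sw_row h, hX.1], fun j => by rw [sw_col h, hX.2]⟩

lemma switch_sum {n m d₁ d₂ : ℕ} (u : Fin n) (v : Fin m) (a : Fin n) (b : Fin m)
    (F : (Fin n → Fin m → Bool) → ℝ) :
    ∑ X ∈ BBG n m d₁ d₂, vind u v a b X * F X
      = ∑ X ∈ BBG n m d₁ d₂, vind u b a v X * F (sw u a v b X) := by
  simp only [vind_eq, ite_mul, one_mul, zero_mul]
  rw [← Finset.sum_filter, ← Finset.sum_filter]
  refine Finset.sum_nbij' (sw u a v b) (sw u a v b) ?_ ?_ ?_ ?_ ?_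
  · intro X hX
    rw [Finset.mem_filter] at hX ⊢
    exact ⟨sw_mem hX.2 hX.1, hX.2.sw⟩
  · intro X hX
    rw [Finset.mem_filter] at hX ⊢
    have h := hX.2.sw
    have h' := sw_mem hX.2 hX.1
    rw [sw_comm] at h h'
    exact ⟨h', h⟩
  · intro X _; exact sw_sw ..
  · intro X _; exact sw_sw ..
  · intro X _; rw [sw_sw]

/-- Linear statistic. -/
def lin {n m : ℕ} (Q : Fin n → Fin m → ℝ) (X : Fin n → Fin m → Bool) : ℝ :=
  ∑ u, ∑ v, Q u v * ind X u v

lemma lin_sw {n m : ℕ} (Q : Fin n → Fin m → ℝ) {u : Fin n} {v : Fin m} {a : Fin n} {b : Fin m}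
    {X : Fin n → Fin m → Bool} (h : Val u v a b X) :
    lin Q X - lin Q (sw u a v b X) = Q u v + Q a b - Q u b - Q a v := by
  obtain ⟨hua, hvb⟩ := h.ne
  obtain ⟨h1, h2, h3, h4⟩ := h
  have key : ∀ i j, Q i j * ind X i j - Q i j * ind (sw u a v b X) i j =
      (if i = u then (if j = v then Q i j else 0) else 0)
      + (if i = a then (if j = b then Q i j else 0) else 0)
      - (if i = u then (if j = b then Q i j else 0) else 0)
      - (if i = a then (if j = v then Q i j else 0) else 0) := by
    intro i j
    by_cases hiu : i = u
    · subst hiu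
      by_cases hjv : j = v
      · subst hjv; simp [ind, sw, h1, hua, hvb]
      by_cases hjb : j = b
      · subst hjb; simp [ind, sw, h3, hua, hjv]
      simp [ind, sw, hjv, hjb]
    by_cases hia : i = a
    · subst hia
      by_cases hjv : j = v
      · subst hjv; simp [ind, sw, h4, hiu, hvb]
      by_cases hjb : j = b
      · subst hjb; simp [ind, sw, h2, hiu, hjv]
      simp [ind, sw, hjv, hjb]
    simp [ind, sw, hiu, hia]
  unfold lin
  simp only [← Finset.sum_sub_distrib, key]
  simp [Finset.sum_add_distrib, Finset.sum_sub_distrib]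



set_option linter.unusedVariables false

lemma bbg_S1 {n m d₁ d₂ : ℕ} {X : Fin n → Fin m → Bool} (hX : X ∈ BBG n m d₁ d₂) :
    ∑ a, ∑ b, ind X a b = n * d₁ := by
  rw [mem_BBG] at hX
  simp [hX.1]

lemma bbg_S2 {n m d₁ d₂ : ℕ} {X : Fin n → Fin m → Bool} (hX : X ∈ BBG n m d₁ d₂) (u : Fin n) :
    ∑ a, ∑ b, ind X a b * ind X u b = d₁ * d₂ := by
  rw [mem_BBG] at hX
  rw [Finset.sum_comm]
  simp only [← Finset.sum_mul, hX.2]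
  rw [← Finset.mul_sum, hX.1, mul_comm]

lemma bbg_S3 {n m d₁ d₂ : ℕ} {X : Fin n → Fin m → Bool} (hX : X ∈ BBG n m d₁ d₂) (v : Fin m) :
    ∑ a, ∑ b, ind X a b * ind X a v = d₁ * d₂ := by
  rw [mem_BBG] at hX
  simp only [← Finset.sum_mul, hX.1]
  rw [← Finset.mul_sum, hX.2]

lemma bbg_S4 {n m d₁ d₂ : ℕ} {X : Fin n → Fin m → Bool} (hX : X ∈ BBG n m d₁ d₂)
    (u : Fin n) (v : Fin m) :
    ∑ a, ∑ b, ind X u b * ind X a v = d₁ * d₂ := by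
  rw [mem_BBG] at hX
  simp only [← Finset.sum_mul, hX.1]
  rw [← Finset.mul_sum, hX.2]

/-- number of 3-paths from `u` to `v` -/
def pth {n m : ℕ} (X : Fin n → Fin m → Bool) (u : Fin n) (v : Fin m) : ℝ :=
  ∑ a, ∑ b, ind X u b * ind X a b * ind X a v

lemma pth_nonneg {n m : ℕ} (X : Fin n → Fin m → Bool) (u : Fin n) (v : Fin m) :
    0 ≤ pth X u v :=
  Finset.sum_nonneg fun a _ => Finset.sum_nonneg fun b _ =>
    mul_nonneg (mul_nonneg (ind_nonneg ..) (ind_nonneg ..)) (ind_nonneg ..)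

lemma sum_vind {n m d₁ d₂ : ℕ} {X : Fin n → Fin m → Bool} (hX : X ∈ BBG n m d₁ d₂)
    (u : Fin n) (v : Fin m) :
    ∑ a, ∑ b, vind u v a b X = ind X u v * (n * d₁ - 2 * (d₁ * d₂) + pth X u v) := by
  have : ∀ a b, vind u v a b X = ind X u v * (ind X a b - ind X a b * ind X u b
      - ind X a b * ind X a v + ind X u b * ind X a b * ind X a v) := by
    intro a b; unfold vind; ring
  simp only [this, ← Finset.mul_sum, Finset.sum_add_distrib, Finset.sum_sub_distrib]
  rw [bbg_S1 hX, bbg_S2 hX, bbg_S3 hX]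
  unfold pth; ring

lemma sum_vind' {n m d₁ d₂ : ℕ} {X : Fin n → Fin m → Bool} (hX : X ∈ BBG n m d₁ d₂)
    (u : Fin n) (b : Fin m) :
    ∑ a, ∑ v, vind u v a b X = (1 - ind X u b) * (d₁ * d₂ - pth X u b) := by
  have : ∀ a v, vind u v a b X = (1 - ind X u b) * (ind X u v * ind X a b
      - ind X u v * ind X a v * ind X a b) := by
    intro a b; unfold vind; ring
  simp only [this, ← Finset.mul_sum, Finset.sum_sub_distrib]
  rw [bbg_S4 hX]
  unfold pth; ring

lemma switch_bound {n m d₁ d₂ : ℕ} (u : Fin n) (v : Fin m)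
    (w : (Fin n → Fin m → Bool) → ℝ) (hw0 : ∀ X, 0 ≤ w X) (ρ : ℝ) (hρ : 0 ≤ ρ)
    (hw : ∀ a b X, Val u v a b X → w X ≤ ρ * w (sw u a v b X)) :
    ((n : ℝ) * d₁ - 2 * (d₁ * d₂)) * ∑ X ∈ BBG n m d₁ d₂, ind X u v * w X
      ≤ ρ * (d₁ * d₂) * ∑ X ∈ BBG n m d₁ d₂, w X := by
  calc ((n : ℝ) * d₁ - 2 * (d₁ * d₂)) * ∑ X ∈ BBG n m d₁ d₂, ind X u v * w X
      ≤ ∑ X ∈ BBG n m d₁ d₂, (∑ a, ∑ b, vind u v a b X) * w X := by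
        rw [Finset.mul_sum]
        refine Finset.sum_le_sum fun X hX => ?_
        rw [sum_vind hX]
        have h1 := mul_nonneg (mul_nonneg (ind_nonneg X u v) (pth_nonneg X u v)) (hw0 X)
        nlinarith
    _ = ∑ a, ∑ b, ∑ X ∈ BBG n m d₁ d₂, vind u v a b X * w X := by
        simp only [Finset.sum_mul]
        rw [Finset.sum_comm]
        refine Finset.sum_congr rfl fun a _ => ?_
        rw [Finset.sum_comm]
    _ ≤ ∑ a, ∑ b, ∑ X ∈ BBG n m d₁ d₂, vind u v a b X * (ρ * w (sw u a v b X)) := by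
        refine Finset.sum_le_sum fun a _ => Finset.sum_le_sum fun b _ =>
          Finset.sum_le_sum fun X hX => ?_
        rw [vind_eq]
        split_ifs with h
        · simpa using hw a b X h
        · simp
    _ = ∑ a, ∑ b, ∑ X ∈ BBG n m d₁ d₂, vind u b a v X * (ρ * w X) := by
        refine Finset.sum_congr rfl fun a _ => Finset.sum_congr rfl fun b _ => ?_
        rw [switch_sum u v a b (fun X => ρ * w (sw u a v b X))]
        simp only [sw_sw]
    _ = ∑ X ∈ BBG n m d₁ d₂, (∑ a, ∑ b, vind u b a v X) * (ρ * w X) := by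
        symm
        simp only [Finset.sum_mul]
        rw [Finset.sum_comm]
        refine Finset.sum_congr rfl fun a _ => ?_
        rw [Finset.sum_comm]
    _ ≤ ∑ X ∈ BBG n m d₁ d₂, (d₁ * d₂) * (ρ * w X) := by
        refine Finset.sum_le_sum fun X hX => mul_le_mul_of_nonneg_right ?_ (mul_nonneg hρ (hw0 X))
        rw [← bbg_S4 hX u v]
        refine Finset.sum_le_sum fun a _ => Finset.sum_le_sum fun b _ => ?_
        unfold vind
        have h1 := ind_nonneg X u b
        have h2 := ind_nonneg X a v
        have h3 := ind_nonneg X u v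
        have h4 := ind_nonneg X a b
        have h3' := ind_le_one X u v
        have h4' := ind_le_one X a b
        have : (1 - ind X u v) * (1 - ind X a b) ≤ 1 := by nlinarith
        calc _ = (ind X u b * ind X a v) * ((1 - ind X u v) * (1 - ind X a b)) := by ring
          _ ≤ (ind X u b * ind X a v) * 1 := by gcongr
          _ = _ := by ring
    _ = _ := by
        rw [← Finset.mul_sum, ← Finset.mul_sum]; ring

lemma switch_bound2 {n m d₁ d₂ : ℕ} (hn : 0 < n) (hd : 0 < d₁) (h4 : 4 * d₂ ≤ n)
    (u : Fin n) (v : Fin m)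
    (w : (Fin n → Fin m → Bool) → ℝ) (hw0 : ∀ X, 0 ≤ w X) (ρ : ℝ) (hρ : 0 ≤ ρ)
    (hw : ∀ a b X, Val u v a b X → w X ≤ ρ * w (sw u a v b X)) :
    ∑ X ∈ BBG n m d₁ d₂, ind X u v * w X
      ≤ 2 * ρ * (d₂ / n) * ∑ X ∈ BBG n m d₁ d₂, w X := by
  have h := switch_bound (d₁ := d₁) (d₂ := d₂) u v w hw0 ρ hρ hw
  have hn' : (0 : ℝ) < n := by exact_mod_cast hn
  have hd' : (0 : ℝ) < d₁ := by exact_mod_cast hd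
  have h4' : 4 * (d₂ : ℝ) ≤ n := by exact_mod_cast h4
  set S := ∑ X ∈ BBG n m d₁ d₂, ind X u v * w X
  set W := ∑ X ∈ BBG n m d₁ d₂, w X
  have hS : 0 ≤ S := Finset.sum_nonneg fun X _ => mul_nonneg (ind_nonneg ..) (hw0 X)
  have h5 : (n * d₁ / 2) * S ≤ ρ * (d₁ * d₂) * W := by
    refine le_trans (mul_le_mul_of_nonneg_right ?_ hS) h
    nlinarith
  have h6 : (n / 2) * S ≤ ρ * d₂ * W := by
    refine le_of_mul_le_mul_left ?_ hd'
    nlinarith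
  have : 2 * ρ * (d₂ / n) * W = (ρ * d₂ * W) / (n / 2) := by field_simp
  rw [this, le_div_iff₀ (by positivity)]
  linarith

/-- discrete mixed difference -/
def dif {n m : ℕ} (Q : Fin n → Fin m → ℝ) (u : Fin n) (v : Fin m) (a : Fin n) (b : Fin m) : ℝ :=
  Q u v + Q a b - Q u b - Q a v

lemma drift {n m d₁ d₂ : ℕ} {X : Fin n → Fin m → Bool} (hX : X ∈ BBG n m d₁ d₂)
    (Q : Fin n → Fin m → ℝ) :
    ∑ u, ∑ v, ∑ a, ∑ b, vind u v a b X * dif Q u v a b =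
      2 * (((n : ℝ) * d₁ - d₁ * d₂) * lin Q X - d₁ * d₂ * ∑ u, ∑ v, Q u v
        + ∑ u, ∑ v, Q u v * pth X u v) := by
  have sym : ∀ u v a b, vind u v a b X = vind a b u v X := by
    intro u v a b; unfold vind; ring
  have e1 : ∑ u, ∑ v, ∑ a, ∑ b, vind u v a b X * Q u v =
      ∑ u, ∑ v, Q u v * (ind X u v * (n * d₁ - 2 * (d₁ * d₂) + pth X u v)) := by
    refine Finset.sum_congr rfl fun u _ => Finset.sum_congr rfl fun v _ => ?_
    rw [← sum_vind hX]
    simp only [Finset.mul_sum]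
    refine Finset.sum_congr rfl fun a _ => Finset.sum_congr rfl fun b _ => ?_
    ring
  have swp : ∀ g : Fin n → Fin m → Fin n → Fin m → ℝ,
      ∑ u, ∑ v, ∑ a, ∑ b, g u v a b = ∑ u, ∑ v, ∑ a, ∑ b, g a b u v := by
    intro g
    simp only [← Fintype.sum_prod_type']
    rw [← Equiv.sum_comp (Equiv.prodAssoc (Fin n) (Fin m) (Fin n × Fin m))]
    rw [← Equiv.sum_comp (Equiv.prodAssoc (Fin n) (Fin m) (Fin n × Fin m))]
    rw [← Equiv.sum_comp (Equiv.prodComm _ _)]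
    rfl
  have e2 : ∑ u, ∑ v, ∑ a, ∑ b, vind u v a b X * Q a b =
      ∑ u, ∑ v, ∑ a, ∑ b, vind u v a b X * Q u v := by
    rw [swp]
    refine Finset.sum_congr rfl fun u _ => Finset.sum_congr rfl fun v _ =>
      Finset.sum_congr rfl fun a _ => Finset.sum_congr rfl fun b _ => ?_
    rw [sym]
  have e3 : ∑ u, ∑ v, ∑ a, ∑ b, vind u v a b X * Q a v =
      ∑ u, ∑ v, ∑ a, ∑ b, vind u v a b X * Q u b := by
    rw [swp]
    refine Finset.sum_congr rfl fun u _ => Finset.sum_congr rfl fun v _ =>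
      Finset.sum_congr rfl fun a _ => Finset.sum_congr rfl fun b _ => ?_
    rw [sym]
  have e4 : ∑ u, ∑ v, ∑ a, ∑ b, vind u v a b X * Q u b =
      ∑ u, ∑ v, Q u v * ((1 - ind X u v) * (d₁ * d₂ - pth X u v)) := by
    refine Finset.sum_congr rfl fun u _ => ?_
    have : ∀ v, ∑ a, ∑ b, vind u v a b X * Q u b = ∑ b, ∑ a, vind u v a b X * Q u b :=
      fun v => Finset.sum_comm
    simp only [this]
    rw [Finset.sum_comm]
    refine Finset.sum_congr rfl fun b _ => ?_
    rw [← sum_vind' hX, Finset.sum_comm]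
    simp only [Finset.mul_sum]
    refine Finset.sum_congr rfl fun a _ => Finset.sum_congr rfl fun v _ => ?_
    ring
  have : ∀ u v a b, vind u v a b X * dif Q u v a b = vind u v a b X * Q u v
      + vind u v a b X * Q a b - vind u v a b X * Q u b - vind u v a b X * Q a v := by
    intro u v a b; unfold dif; ring
  simp only [this, Finset.sum_add_distrib, Finset.sum_sub_distrib]
  rw [e2, e3, e4, e1]
  unfold lin
  simp only [Finset.mul_sum]
  simp only [← Finset.sum_add_distrib, ← Finset.sum_sub_distrib, Finset.mul_sum]
  refine Finset.sum_congr rfl fun u _ => Finset.sum_congr rfl fun v _ => ?_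
  ring


set_option linter.unusedVariables false

/-- exponential weight -/
def wt {n m : ℕ} (θ : ℝ) (Q : Fin n → Fin m → ℝ) (X : Fin n → Fin m → Bool) : ℝ :=
  Real.exp (θ * lin Q X)

lemma wt_pos {n m : ℕ} (θ : ℝ) (Q : Fin n → Fin m → ℝ) (X : Fin n → Fin m → Bool) :
    0 < wt θ Q X := Real.exp_pos _

lemma dif_le {n m : ℕ} {Q : Fin n → Fin m → ℝ} {q : ℝ} (hQ : ∀ u v, |Q u v| ≤ q)
    (u : Fin n) (v : Fin m) (a : Fin n) (b : Fin m) : dif Q u v a b ≤ 4 * q := by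
  have h1 := abs_le.1 (hQ u v)
  have h2 := abs_le.1 (hQ a b)
  have h3 := abs_le.1 (hQ u b)
  have h4 := abs_le.1 (hQ a v)
  unfold dif; linarith

lemma dif_sq_le {n m : ℕ} (Q : Fin n → Fin m → ℝ)
    (u : Fin n) (v : Fin m) (a : Fin n) (b : Fin m) :
    dif Q u v a b ^ 2 ≤ 4 * (Q u v ^ 2 + Q a b ^ 2 + Q u b ^ 2 + Q a v ^ 2) := by
  unfold dif
  nlinarith [sq_nonneg (Q u v - Q a b), sq_nonneg (Q u v + Q u b), sq_nonneg (Q u v + Q a v),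
    sq_nonneg (Q a b + Q u b), sq_nonneg (Q a b + Q a v), sq_nonneg (Q u b - Q a v)]

lemma wt_ratio {n m : ℕ} {Q : Fin n → Fin m → ℝ} {q θ : ℝ} (hθ : 0 ≤ θ)
    (hQ : ∀ u v, |Q u v| ≤ q) {u : Fin n} {v : Fin m} {a : Fin n} {b : Fin m}
    {X : Fin n → Fin m → Bool} (h : Val u v a b X) :
    wt θ Q X ≤ Real.exp (4 * θ * q) * wt θ Q (sw u a v b X) := by
  unfold wt
  rw [← Real.exp_add]
  apply Real.exp_le_exp.2
  have h1 := lin_sw Q h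
  have h2 := dif_le hQ u v a b
  unfold dif at h2
  rw [← h1] at h2
  nlinarith

lemma sum_wt_ind {n m d₁ d₂ : ℕ} (hn : 0 < n) (hd : 0 < d₁) (h4 : 4 * d₂ ≤ n)
    {Q : Fin n → Fin m → ℝ} {q θ : ℝ} (hθ : 0 ≤ θ)
    (hQ : ∀ u v, |Q u v| ≤ q) (u : Fin n) (v : Fin m) :
    ∑ X ∈ BBG n m d₁ d₂, ind X u v * wt θ Q X
      ≤ 2 * Real.exp (4 * θ * q) * (d₂ / n) * ∑ X ∈ BBG n m d₁ d₂, wt θ Q X :=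
  switch_bound2 hn hd h4 u v _ (fun X => (wt_pos θ Q X).le) _ (Real.exp_pos _).le
    (fun a b X h => wt_ratio hθ hQ h)

lemma sum_wt_path {n m d₁ d₂ : ℕ} (hn : 0 < n) (hd : 0 < d₁) (h4 : 4 * d₂ ≤ n)
    {Q : Fin n → Fin m → ℝ} {q θ : ℝ} (hθ : 0 ≤ θ)
    (hQ : ∀ u v, |Q u v| ≤ q) (u : Fin n) (v : Fin m) (a : Fin n) (b : Fin m)
    (hu : a ≠ u) (hv : b ≠ v) :
    ∑ X ∈ BBG n m d₁ d₂, ind X a b * (ind X u b * ind X a v * wt θ Q X)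
      ≤ 2 * Real.exp (4 * θ * q) * (d₂ / n) *
        ∑ X ∈ BBG n m d₁ d₂, ind X u b * ind X a v * wt θ Q X := by
  refine switch_bound2 hn hd h4 a b _ (fun X => mul_nonneg (mul_nonneg (ind_nonneg ..)
    (ind_nonneg ..)) (wt_pos θ Q X).le) _ (Real.exp_pos _).le ?_
  intro a' b' X h
  have hr := wt_ratio hθ hQ h
  by_cases h1 : X u b = true
  · by_cases h2 : X a v = true
    · have h3 : u ≠ a' := by
        rintro rfl
        have := h.2.2.2
        simp_all
      have h4 : v ≠ b' := by
        rintro rfl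
        have := h.2.2.1
        simp_all
      have e1 : ind (sw a a' b b' X) u b = 1 := by
        simp [ind, sw, h1, hu.symm, h3]
      have e2 : ind (sw a a' b b' X) a v = 1 := by
        simp [ind, sw, h2, hv.symm, h4]
      have e3 : ind X u b = 1 := by simp [ind, h1]
      have e4 : ind X a v = 1 := by simp [ind, h2]
      rw [e1, e2, e3, e4]
      simpa using hr
    · have e4 : ind X a v = 0 := by simp [ind, h2]
      rw [e4]
      simp only [mul_zero, zero_mul]
      exact mul_nonneg (Real.exp_pos _).le (mul_nonneg (mul_nonneg (ind_nonneg ..)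
        (ind_nonneg ..)) (wt_pos θ Q _).le)
  · have e4 : ind X u b = 0 := by simp [ind, h1]
    rw [e4]
    simp only [zero_mul]
    exact mul_nonneg (Real.exp_pos _).le (mul_nonneg (mul_nonneg (ind_nonneg ..)
        (ind_nonneg ..)) (wt_pos θ Q _).le)

lemma sum_wt_pth {n m d₁ d₂ : ℕ} (hn : 0 < n) (hd : 0 < d₁) (hd2 : 0 < d₂) (h21 : d₂ ≤ d₁)
    (h4 : 4 * d₂ ≤ n)
    {Q : Fin n → Fin m → ℝ} {q θ : ℝ} (hθ : 0 ≤ θ)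
    (hQ : ∀ u v, |Q u v| ≤ q) (u : Fin n) (v : Fin m) :
    ∑ X ∈ BBG n m d₁ d₂, pth X u v * wt θ Q X
      ≤ 6 * Real.exp (4 * θ * q) * (d₂ / n) * (d₁ * d₂) * ∑ X ∈ BBG n m d₁ d₂, wt θ Q X := by
  set ρ := Real.exp (4 * θ * q) with hρdef
  have hρ : 0 < ρ := Real.exp_pos _
  set W := ∑ X ∈ BBG n m d₁ d₂, wt θ Q X with hW
  have hW0 : 0 ≤ W := Finset.sum_nonneg fun X _ => (wt_pos θ Q X).le
  have hd' : (1 : ℝ) ≤ d₁ := by exact_mod_cast hd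
  have hd2' : (1 : ℝ) ≤ d₂ := by exact_mod_cast hd2
  have h21' : (d₂ : ℝ) ≤ d₁ := by exact_mod_cast h21
  have hp : (0 : ℝ) ≤ d₂ / n := by positivity
  have pt : ∀ X ∈ BBG n m d₁ d₂, pth X u v * wt θ Q X ≤
      (∑ a, ∑ b, if a ≠ u ∧ b ≠ v then ind X a b * (ind X u b * ind X a v * wt θ Q X) else 0)
      + (d₁ + d₂) * (ind X u v * wt θ Q X) := by
    intro X hX
    have hX' := mem_BBG.1 hX
    have e1 : ((d₁ : ℝ) + d₂) * (ind X u v * wt θ Q X) =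
        ∑ a, ∑ b, ((if a = u then ind X u v * ind X u b * wt θ Q X else 0) +
          (if b = v then ind X u v * ind X a v * wt θ Q X else 0)) := by
      simp only [Finset.sum_add_distrib]
      rw [Finset.sum_comm]
      simp only [Finset.sum_ite_eq', Finset.mem_univ, if_true]
      simp only [← Finset.mul_sum, ← Finset.sum_mul, hX'.1, hX'.2]
      ring
    rw [e1, ← Finset.sum_add_distrib]
    unfold pth
    rw [Finset.sum_mul]
    refine Finset.sum_le_sum fun a _ => ?_
    rw [← Finset.sum_add_distrib, Finset.sum_mul]
    refine Finset.sum_le_sum fun b _ => ?_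
    have hw := (wt_pos θ Q X).le
    by_cases hau : a = u
    · subst hau
      have : 0 ≤ (if b = v then ind X a v * ind X a v * wt θ Q X else 0) := by
        split_ifs
        · exact mul_nonneg (mul_nonneg (ind_nonneg ..) (ind_nonneg ..)) hw
        · exact le_rfl
      simp only [ne_eq, not_true_eq_false, false_and, if_false, if_true, zero_add]
      have h2 := ind_sq X a b
      rw [h2]
      linarith
    · by_cases hbv : b = v
      · subst hbv
        simp only [ne_eq, not_true_eq_false, and_false, if_false, if_true, zero_add, hau]
        have h2 := ind_sq X a b
        rw [mul_assoc (ind X u b), h2]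
      · simp only [ne_eq, hau, hbv, not_false_eq_true, and_self, if_true, if_false, add_zero]
        apply le_of_eq; ring
  refine (Finset.sum_le_sum pt).trans ?_
  rw [Finset.sum_add_distrib]
  have A : ∑ X ∈ BBG n m d₁ d₂, (∑ a, ∑ b, if a ≠ u ∧ b ≠ v then
      ind X a b * (ind X u b * ind X a v * wt θ Q X) else 0) ≤
      2 * ρ * (d₂ / n) * (d₁ * d₂) * W := by
    rw [Finset.sum_comm]
    have : ∀ a, ∑ X ∈ BBG n m d₁ d₂, ∑ b, (if a ≠ u ∧ b ≠ v then
      ind X a b * (ind X u b * ind X a v * wt θ Q X) else 0) ≤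
        ∑ b, 2 * ρ * (d₂ / n) * ∑ X ∈ BBG n m d₁ d₂, ind X u b * ind X a v * wt θ Q X := by
      intro a
      rw [Finset.sum_comm]
      refine Finset.sum_le_sum fun b _ => ?_
      by_cases h : a ≠ u ∧ b ≠ v
      · simp only [h, ne_eq, not_false_eq_true, and_self, if_true]
        exact sum_wt_path hn hd h4 hθ hQ u v a b h.1 h.2
      · simp only [h, if_false, Finset.sum_const_zero]
        exact mul_nonneg (by positivity) (Finset.sum_nonneg fun X _ =>
          mul_nonneg (mul_nonneg (ind_nonneg ..) (ind_nonneg ..)) (wt_pos θ Q X).le)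
    refine (Finset.sum_le_sum fun a _ => this a).trans ?_
    simp only [← Finset.mul_sum]
    rw [mul_assoc (2 * ρ * (d₂ / n))]
    refine mul_le_mul_of_nonneg_left ?_ (by positivity)
    have e : ∀ a, ∑ b, ∑ X ∈ BBG n m d₁ d₂, ind X u b * ind X a v * wt θ Q X =
      ∑ X ∈ BBG n m d₁ d₂, ∑ b, ind X u b * ind X a v * wt θ Q X := fun a => Finset.sum_comm
    simp only [e]
    rw [Finset.sum_comm, hW, Finset.mul_sum]
    refine Finset.sum_le_sum fun X hX => ?_
    simp only [← Finset.sum_mul]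
    have hX' := mem_BBG.1 hX
    simp only [hX'.1]
    simp only [← Finset.mul_sum, hX'.2]
    exact le_rfl
  have B := sum_wt_ind (d₁ := d₁) hn hd h4 hθ hQ u v
  rw [← Finset.mul_sum]
  have C : ((d₁ : ℝ) + d₂) * ∑ X ∈ BBG n m d₁ d₂, ind X u v * wt θ Q X ≤
      (2 * (d₁ * d₂)) * (2 * ρ * (d₂ / n) * W) := by
    have hS : 0 ≤ ∑ X ∈ BBG n m d₁ d₂, ind X u v * wt θ Q X :=
      Finset.sum_nonneg fun X _ => mul_nonneg (ind_nonneg ..) (wt_pos θ Q X).le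
    refine mul_le_mul ?_ B hS (by positivity)
    nlinarith
  calc _ ≤ _ := add_le_add A C
    _ = _ := by ring

lemma exp_diff_le {x y θ : ℝ} (hθ : 0 ≤ θ) :
    (Real.exp (θ * x) - Real.exp (θ * y)) * (x - y) ≤
      θ * (x - y) ^ 2 * (Real.exp (θ * x) + Real.exp (θ * y)) := by
  have key : ∀ s t : ℝ, t ≤ s → (Real.exp (θ * s) - Real.exp (θ * t)) * (s - t) ≤
      θ * (s - t) ^ 2 * (Real.exp (θ * s) + Real.exp (θ * t)) := by
    intro s t h
    have h1 : Real.exp (θ * s) * (1 + (θ * t - θ * s)) ≤ Real.exp (θ * t) := by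
      have := Real.add_one_le_exp (θ * t - θ * s)
      have h2 : Real.exp (θ * t) = Real.exp (θ * s) * Real.exp (θ * t - θ * s) := by
        rw [← Real.exp_add]; congr 1; ring
      rw [h2]
      exact mul_le_mul_of_nonneg_left (by linarith) (Real.exp_pos _).le
    have h3 : Real.exp (θ * s) - Real.exp (θ * t) ≤ Real.exp (θ * s) * (θ * (s - t)) := by
      nlinarith
    have h4 := mul_le_mul_of_nonneg_right h3 (sub_nonneg.2 h)
    have h5 : 0 ≤ θ * (s - t) ^ 2 * Real.exp (θ * t) := by positivity
    nlinarith
  rcases le_total y x with h | h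
  · exact key x y h
  · have := key y x h
    nlinarith

lemma drift_le {n m d₁ d₂ : ℕ} {Q : Fin n → Fin m → ℝ} {θ : ℝ} (hθ : 0 ≤ θ) :
    ∑ u, ∑ v, ∑ a, ∑ b, ∑ X ∈ BBG n m d₁ d₂, vind u v a b X * (dif Q u v a b * wt θ Q X) ≤
      θ * ∑ u, ∑ v, ∑ a, ∑ b, ∑ X ∈ BBG n m d₁ d₂,
        vind u v a b X * (dif Q u v a b ^ 2 * wt θ Q X) := by
  have ren : ∀ g : Fin n → Fin m → Fin n → Fin m → ℝ,
      ∑ u, ∑ v, ∑ a, ∑ b, g u v a b = ∑ u, ∑ v, ∑ a, ∑ b, g u b a v := by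
    intro g
    refine Finset.sum_congr rfl fun u _ => ?_
    have : ∀ v, ∑ a, ∑ b, g u v a b = ∑ b, ∑ a, g u v a b := fun v => Finset.sum_comm
    simp only [this]
    rw [Finset.sum_comm]
    refine Finset.sum_congr rfl fun v _ => Finset.sum_comm
  have dsym : ∀ u v a b, dif Q u b a v = - dif Q u v a b := by
    intro u v a b; unfold dif; ring
  have e1 : ∑ u, ∑ v, ∑ a, ∑ b, ∑ X ∈ BBG n m d₁ d₂,
        vind u v a b X * (dif Q u v a b * wt θ Q X) =
      - ∑ u, ∑ v, ∑ a, ∑ b, ∑ X ∈ BBG n m d₁ d₂,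
        vind u v a b X * (dif Q u v a b * wt θ Q (sw u a v b X)) := by
    rw [ren]
    simp only [← Finset.sum_neg_distrib]
    refine Finset.sum_congr rfl fun u _ => Finset.sum_congr rfl fun v _ =>
      Finset.sum_congr rfl fun a _ => Finset.sum_congr rfl fun b _ => ?_
    rw [switch_sum u b a v]
    refine Finset.sum_congr rfl fun X _ => ?_
    rw [dsym, sw_comm]; ring
  have e2 : ∑ u, ∑ v, ∑ a, ∑ b, ∑ X ∈ BBG n m d₁ d₂,
        vind u v a b X * (dif Q u v a b ^ 2 * wt θ Q X) =
      ∑ u, ∑ v, ∑ a, ∑ b, ∑ X ∈ BBG n m d₁ d₂,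
        vind u v a b X * (dif Q u v a b ^ 2 * wt θ Q (sw u a v b X)) := by
    rw [ren]
    refine Finset.sum_congr rfl fun u _ => Finset.sum_congr rfl fun v _ =>
      Finset.sum_congr rfl fun a _ => Finset.sum_congr rfl fun b _ => ?_
    rw [switch_sum u b a v]
    refine Finset.sum_congr rfl fun X _ => ?_
    rw [dsym, sw_comm]; ring
  have e3 : ∑ u, ∑ v, ∑ a, ∑ b, ∑ X ∈ BBG n m d₁ d₂,
        (vind u v a b X * (dif Q u v a b * wt θ Q X) -
        vind u v a b X * (dif Q u v a b * wt θ Q (sw u a v b X))) ≤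
      ∑ u, ∑ v, ∑ a, ∑ b, ∑ X ∈ BBG n m d₁ d₂,
        (θ * (vind u v a b X * (dif Q u v a b ^ 2 * wt θ Q X)) +
        θ * (vind u v a b X * (dif Q u v a b ^ 2 * wt θ Q (sw u a v b X)))) := by
    refine Finset.sum_le_sum fun u _ => Finset.sum_le_sum fun v _ =>
      Finset.sum_le_sum fun a _ => Finset.sum_le_sum fun b _ => Finset.sum_le_sum fun X _ => ?_
    rw [vind_eq]
    split_ifs with h
    · have h1 := lin_sw Q h
      have h2 := exp_diff_le (x := lin Q X) (y := lin Q (sw u a v b X)) hθ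
      rw [h1] at h2
      unfold wt dif
      nlinarith
    · simp
  simp only [Finset.sum_sub_distrib, Finset.sum_add_distrib, ← Finset.mul_sum] at e3
  rw [← e2] at e3
  linarith


lemma quad_le {n m d₁ d₂ : ℕ} {X : Fin n → Fin m → Bool} (hX : X ∈ BBG n m d₁ d₂)
    (R : Fin n → Fin m → ℝ) (hR : ∀ u v, 0 ≤ R u v) :
    ∑ u, ∑ v, ∑ a, ∑ b, vind u v a b X * (R u v + R a b + R u b + R a v) ≤
      2 * (n * d₁) * lin R X + 2 * (d₁ * d₂) * ∑ u, ∑ v, R u v := by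
  have hX' := mem_BBG.1 hX
  have pt : ∀ u v a b, vind u v a b X * (R u v + R a b + R u b + R a v) ≤
      R u v * ind X u v * ind X a b + ind X u v * (R a b * ind X a b)
      + ind X u v * (R u b * ind X a b) + ind X u v * (R a v * ind X a b) := by
    intro u v a b
    have h0 : 0 ≤ R u v + R a b + R u b + R a v := by
      have := hR u v; have := hR a b; have := hR u b; have := hR a v; linarith
    have h1 : vind u v a b X ≤ ind X u v * ind X a b := by
      unfold vind
      have h1 := ind_nonneg X u b
      have h2 := ind_nonneg X a v
      have h1' := ind_le_one X u b
      have h2' := ind_le_one X a v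
      have : (1 - ind X u b) * (1 - ind X a v) ≤ 1 := by nlinarith
      rw [mul_assoc (ind X u v * ind X a b)]
      exact mul_le_of_le_one_right (mul_nonneg (ind_nonneg ..) (ind_nonneg ..)) this
    calc _ ≤ _ := mul_le_mul_of_nonneg_right h1 h0
      _ = _ := by ring
  refine (Finset.sum_le_sum fun u _ => Finset.sum_le_sum fun v _ =>
      Finset.sum_le_sum fun a _ => Finset.sum_le_sum fun b _ => pt u v a b).trans ?_
  simp only [Finset.sum_add_distrib]
  have s1 : ∑ u, ∑ v, ∑ a, ∑ b, R u v * ind X u v * ind X a b = n * d₁ * lin R X := by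
    simp only [← Finset.mul_sum]
    rw [bbg_S1 hX]
    simp only [← Finset.sum_mul]
    unfold lin; ring
  have s2 : ∑ u, ∑ v, ∑ a, ∑ b, ind X u v * (R a b * ind X a b) = n * d₁ * lin R X := by
    simp only [← Finset.mul_sum]
    simp only [← Finset.sum_mul]
    rw [bbg_S1 hX]
    unfold lin; ring
  have s3 : ∑ u, ∑ v, ∑ a, ∑ b, ind X u v * (R u b * ind X a b) =
      d₁ * d₂ * ∑ u, ∑ v, R u v := by
    rw [Finset.mul_sum]
    refine Finset.sum_congr rfl fun u _ => ?_
    simp only [← Finset.mul_sum]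
    rw [← Finset.sum_mul, hX'.1, Finset.sum_comm]
    simp only [← Finset.mul_sum, hX'.2]
    rw [← Finset.sum_mul]; ring
  have s4 : ∑ u, ∑ v, ∑ a, ∑ b, ind X u v * (R a v * ind X a b) =
      d₁ * d₂ * ∑ u, ∑ v, R u v := by
    simp only [← Finset.mul_sum, hX'.1]
    rw [Finset.sum_comm]
    simp only [← Finset.sum_mul, hX'.2]
    rw [← Finset.mul_sum, ← Finset.sum_mul, Finset.sum_comm (f := fun u v => R u v)]
    ring
  rw [s1, s2, s3, s4]
  apply le_of_eq; ring

lemma sum_lin_wt {n m d₁ d₂ : ℕ} (hn : 0 < n) (hd : 0 < d₁) (h4 : 4 * d₂ ≤ n)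
    {Q : Fin n → Fin m → ℝ} {q θ : ℝ} (hθ : 0 ≤ θ)
    (hQ : ∀ u v, |Q u v| ≤ q) (R : Fin n → Fin m → ℝ) (hR : ∀ u v, 0 ≤ R u v) :
    ∑ X ∈ BBG n m d₁ d₂, lin R X * wt θ Q X
      ≤ 2 * Real.exp (4 * θ * q) * (d₂ / n) * (∑ u, ∑ v, R u v)
        * ∑ X ∈ BBG n m d₁ d₂, wt θ Q X := by
  have e : ∑ X ∈ BBG n m d₁ d₂, lin R X * wt θ Q X =
      ∑ u, ∑ v, R u v * ∑ X ∈ BBG n m d₁ d₂, ind X u v * wt θ Q X := by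
    unfold lin
    simp only [Finset.sum_mul]
    rw [Finset.sum_comm]
    refine Finset.sum_congr rfl fun u _ => ?_
    rw [Finset.sum_comm]
    refine Finset.sum_congr rfl fun v _ => ?_
    rw [Finset.mul_sum]
    refine Finset.sum_congr rfl fun X _ => ?_
    ring
  rw [e]
  refine (Finset.sum_le_sum fun u _ => Finset.sum_le_sum fun v _ =>
    mul_le_mul_of_nonneg_left (sum_wt_ind (d₁ := d₁) hn hd h4 hθ hQ u v) (hR u v)).trans ?_
  simp only [← Finset.sum_mul]
  apply le_of_eq; ring

lemma tilt {n m d₁ d₂ : ℕ} (hn : 0 < n) (hd : 0 < d₁) (hd2 : 0 < d₂) (h21 : d₂ ≤ d₁)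
    (h4 : 4 * d₂ ≤ n)
    {Q : Fin n → Fin m → ℝ} {q θ : ℝ} (hq : 0 ≤ q) (hθ : 0 ≤ θ) (hQ : ∀ u v, |Q u v| ≤ q) :
    ∑ X ∈ BBG n m d₁ d₂, lin Q X * wt θ Q X ≤
      (2 * (d₂ / n : ℝ) * |∑ u, ∑ v, Q u v|
        + 12 * Real.exp (4 * θ * q) * (d₂ / n : ℝ) ^ 2 * (∑ u, ∑ v, |Q u v|)
        + 24 * Real.exp (4 * θ * q) * θ * (d₂ / n : ℝ) * (∑ u, ∑ v, Q u v ^ 2))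
        * ∑ X ∈ BBG n m d₁ d₂, wt θ Q X := by
  set ρ := Real.exp (4 * θ * q) with hρdef
  have hρ : 1 ≤ ρ := Real.one_le_exp (by positivity)
  set W := ∑ X ∈ BBG n m d₁ d₂, wt θ Q X with hW
  have hW0 : 0 ≤ W := Finset.sum_nonneg fun X _ => (wt_pos θ Q X).le
  have hn' : (0 : ℝ) < n := by exact_mod_cast hn
  have hd' : (1 : ℝ) ≤ d₁ := by exact_mod_cast hd
  have h4' : 4 * (d₂ : ℝ) ≤ n := by exact_mod_cast h4
  set p : ℝ := d₂ / n with hp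
  have hp0 : 0 ≤ p := by positivity
  have hp1 : p ≤ 1 / 4 := by
    rw [hp, div_le_iff₀ hn']; linarith
  have hdp : (d₂ : ℝ) = n * p := by rw [hp]; field_simp
  set L := ∑ X ∈ BBG n m d₁ d₂, lin Q X * wt θ Q X with hL
  set sQ := ∑ u, ∑ v, Q u v with hsQ
  set aQ := ∑ u, ∑ v, |Q u v| with haQ
  set qQ := ∑ u, ∑ v, Q u v ^ 2 with hqQ
  have haQ0 : 0 ≤ aQ := Finset.sum_nonneg fun u _ => Finset.sum_nonneg fun v _ => abs_nonneg _
  have hqQ0 : 0 ≤ qQ := Finset.sum_nonneg fun u _ => Finset.sum_nonneg fun v _ => sq_nonneg _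
  have D := drift_le (n := n) (m := m) (d₁ := d₁) (d₂ := d₂) (Q := Q) hθ
  have com : ∀ g : Fin n → Fin m → Fin n → Fin m → (Fin n → Fin m → Bool) → ℝ,
      ∑ u, ∑ v, ∑ a, ∑ b, ∑ X ∈ BBG n m d₁ d₂, vind u v a b X * (g u v a b X * wt θ Q X)
      = ∑ X ∈ BBG n m d₁ d₂, (∑ u, ∑ v, ∑ a, ∑ b, vind u v a b X * g u v a b X) * wt θ Q X := by
    intro g
    simp only [Finset.sum_mul]
    symm
    rw [Finset.sum_comm]
    refine Finset.sum_congr rfl fun u _ => ?_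
    rw [Finset.sum_comm]
    refine Finset.sum_congr rfl fun v _ => ?_
    rw [Finset.sum_comm]
    refine Finset.sum_congr rfl fun a _ => ?_
    rw [Finset.sum_comm]
    refine Finset.sum_congr rfl fun b _ => Finset.sum_congr rfl fun X _ => ?_
    ring
  rw [com (fun u v a b _ => dif Q u v a b), com (fun u v a b _ => dif Q u v a b ^ 2)] at D
  -- left side
  have e1 : ∑ X ∈ BBG n m d₁ d₂,
      (∑ u, ∑ v, ∑ a, ∑ b, vind u v a b X * dif Q u v a b) * wt θ Q X =
      2 * (((n : ℝ) * d₁ - d₁ * d₂) * L - d₁ * d₂ * sQ * W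
        + ∑ u, ∑ v, Q u v * ∑ X ∈ BBG n m d₁ d₂, pth X u v * wt θ Q X) := by
    have e2 : ∑ u, ∑ v, Q u v * ∑ X ∈ BBG n m d₁ d₂, pth X u v * wt θ Q X =
        ∑ X ∈ BBG n m d₁ d₂, (∑ u, ∑ v, Q u v * pth X u v) * wt θ Q X := by
      simp only [Finset.sum_mul, Finset.mul_sum]
      symm
      rw [Finset.sum_comm]
      refine Finset.sum_congr rfl fun u _ => ?_
      rw [Finset.sum_comm]
      refine Finset.sum_congr rfl fun v _ => Finset.sum_congr rfl fun X _ => ?_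
      ring
    rw [e2, hL, hW, Finset.mul_sum, Finset.mul_sum, ← Finset.sum_sub_distrib,
      ← Finset.sum_add_distrib, Finset.mul_sum]
    refine Finset.sum_congr rfl fun X hX => ?_
    rw [drift hX]; ring
  have e3 : - (aQ * (6 * ρ * p * (d₁ * d₂) * W)) ≤
      ∑ u, ∑ v, Q u v * ∑ X ∈ BBG n m d₁ d₂, pth X u v * wt θ Q X := by
    rw [haQ, Finset.sum_mul, ← Finset.sum_neg_distrib]
    refine Finset.sum_le_sum fun u _ => ?_
    rw [Finset.sum_mul, ← Finset.sum_neg_distrib]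
    refine Finset.sum_le_sum fun v _ => ?_
    have h1 := sum_wt_pth (m := m) hn hd hd2 h21 h4 hθ hQ u v
    have h0 : 0 ≤ ∑ X ∈ BBG n m d₁ d₂, pth X u v * wt θ Q X :=
      Finset.sum_nonneg fun X _ => mul_nonneg (pth_nonneg ..) (wt_pos θ Q X).le
    have h2 := mul_le_mul_of_nonneg_left h1 (abs_nonneg (Q u v))
    have h3 := mul_le_mul_of_nonneg_right (neg_abs_le (Q u v)) h0
    linarith
  have e4 : ∑ X ∈ BBG n m d₁ d₂,
      (∑ u, ∑ v, ∑ a, ∑ b, vind u v a b X * dif Q u v a b ^ 2) * wt θ Q X ≤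
      24 * ρ * (n * d₁) * p * qQ * W := by
    have f1 : ∀ X ∈ BBG n m d₁ d₂,
        (∑ u, ∑ v, ∑ a, ∑ b, vind u v a b X * dif Q u v a b ^ 2) * wt θ Q X ≤
        8 * (n * d₁) * (lin (fun u v => Q u v ^ 2) X * wt θ Q X)
          + 8 * (d₁ * d₂) * qQ * wt θ Q X := by
      intro X hX
      have h1 := quad_le hX (fun u v => Q u v ^ 2) (fun u v => sq_nonneg _)
      have h2 : ∑ u, ∑ v, ∑ a, ∑ b, vind u v a b X * dif Q u v a b ^ 2 ≤
          4 * ∑ u, ∑ v, ∑ a, ∑ b, vind u v a b X *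
            (Q u v ^ 2 + Q a b ^ 2 + Q u b ^ 2 + Q a v ^ 2) := by
        simp only [Finset.mul_sum]
        refine Finset.sum_le_sum fun u _ => Finset.sum_le_sum fun v _ =>
          Finset.sum_le_sum fun a _ => Finset.sum_le_sum fun b _ => ?_
        have := mul_le_mul_of_nonneg_left (dif_sq_le Q u v a b) (vind_nonneg u v a b X)
        linarith
      have h3 := mul_le_mul_of_nonneg_right (h2.trans
        (mul_le_mul_of_nonneg_left h1 (by norm_num))) (wt_pos θ Q X).le
      refine h3.trans (le_of_eq ?_)
      rw [hqQ]; ring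
    refine (Finset.sum_le_sum f1).trans ?_
    rw [Finset.sum_add_distrib, ← Finset.mul_sum, ← Finset.mul_sum, ← hW]
    have f2 := sum_lin_wt (d₁ := d₁) hn hd h4 hθ hQ (fun u v => Q u v ^ 2) (fun u v => sq_nonneg _)
    have f3 := mul_le_mul_of_nonneg_left f2 (show (0:ℝ) ≤ 8 * (n * d₁) by positivity)
    have f4 : 0 ≤ (ρ - 1) * (8 * ((n * d₁) * p * qQ * W)) :=
      mul_nonneg (by linarith) (by positivity)
    calc _ ≤ _ := add_le_add_left f3 _
      _ = 16 * ρ * (n * d₁) * p * qQ * W + 8 * (d₁ * (n * p)) * qQ * W := by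
        rw [← hdp, ← hW, ← hp]; ring
      _ ≤ _ := by nlinarith
  rw [e1] at D
  have e5 : ((n : ℝ) * d₁ - d₁ * d₂) * L ≤ d₁ * d₂ * |sQ| * W + aQ * (6 * ρ * p * (d₁ * d₂) * W)
      + θ * (12 * ρ * (n * d₁) * p * qQ * W) := by
    have g1 := mul_le_mul_of_nonneg_left e4 hθ
    have g2 : (d₁ : ℝ) * d₂ * sQ * W ≤ d₁ * d₂ * |sQ| * W := by
      gcongr; exact le_abs_self _
    nlinarith
  set R := p * |sQ| * W + 6 * ρ * p ^ 2 * aQ * W + 12 * ρ * θ * p * qQ * W with hR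
  have hR0 : 0 ≤ R := by positivity
  have e6 : (1 - p) * L ≤ R := by
    have hnd : (0 : ℝ) < n * d₁ := by positivity
    refine le_of_mul_le_mul_left ?_ hnd
    rw [hdp] at e5
    calc _ = ((n : ℝ) * d₁ - d₁ * (n * p)) * L := by ring
      _ ≤ _ := e5
      _ = _ := by rw [hR]; ring
  have e7 : L ≤ 2 * R := by
    rcases le_total 0 L with h | h
    · nlinarith
    · linarith
  refine e7.trans (le_of_eq ?_)
  rw [hR]; ring

/-- Chernoff bound by tilting. -/
lemma chernoff {n m d₁ d₂ : ℕ} {Q : Fin n → Fin m → ℝ} {θ A t : ℝ} (hθ : 0 ≤ θ)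
    (h : ∑ X ∈ BBG n m d₁ d₂, lin Q X * wt θ Q X ≤ A * ∑ X ∈ BBG n m d₁ d₂, wt θ Q X) :
    (((BBG n m d₁ d₂).filter fun X => t ≤ lin Q X).card : ℝ) ≤
      Real.exp (θ * (A - t)) * (BBG n m d₁ d₂).card := by
  have h1 : ∑ X ∈ BBG n m d₁ d₂, wt θ Q X ≤ Real.exp (θ * A) * (BBG n m d₁ d₂).card := by
    have pt : ∀ X ∈ BBG n m d₁ d₂,
        wt θ Q X - θ * (lin Q X * wt θ Q X - A * wt θ Q X) ≤ Real.exp (θ * A) := by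
      intro X _
      have h2 := Real.add_one_le_exp (θ * A - θ * lin Q X)
      have h3 := mul_le_mul_of_nonneg_left h2 (wt_pos θ Q X).le
      have h4 : wt θ Q X * Real.exp (θ * A - θ * lin Q X) = Real.exp (θ * A) := by
        unfold wt; rw [← Real.exp_add]; congr 1; ring
      rw [h4] at h3
      linarith
    have h5 := Finset.sum_le_sum pt
    rw [Finset.sum_sub_distrib, ← Finset.mul_sum, Finset.sum_sub_distrib, ← Finset.mul_sum,
      Finset.sum_const, nsmul_eq_mul] at h5
    have h6 := mul_nonneg hθ (sub_nonneg.2 h)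
    nlinarith
  have h2 : (((BBG n m d₁ d₂).filter fun X => t ≤ lin Q X).card : ℝ) * Real.exp (θ * t) ≤
      ∑ X ∈ BBG n m d₁ d₂, wt θ Q X := by
    calc _ = ∑ X ∈ (BBG n m d₁ d₂).filter (fun X => t ≤ lin Q X), Real.exp (θ * t) := by
          rw [Finset.sum_const, nsmul_eq_mul]
      _ ≤ ∑ X ∈ (BBG n m d₁ d₂).filter (fun X => t ≤ lin Q X), wt θ Q X := by
          refine Finset.sum_le_sum fun X hX => ?_
          rw [Finset.mem_filter] at hX
          exact Real.exp_le_exp.2 (mul_le_mul_of_nonneg_left hX.2 hθ)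
      _ ≤ _ := Finset.sum_le_sum_of_subset_of_nonneg (Finset.filter_subset _ _)
          fun X _ _ => (wt_pos θ Q X).le
  have h3 : Real.exp (θ * (A - t)) * Real.exp (θ * t) = Real.exp (θ * A) := by
    rw [← Real.exp_add]; congr 1; ring
  refine le_of_mul_le_mul_right ?_ (Real.exp_pos (θ * t))
  calc _ ≤ _ := h2.trans h1
    _ = _ := by rw [← h3]; ring


/-- the light part of the rank one matrix -/
def lightQ {n m : ℕ} (c : ℝ) (x : Fin n → ℝ) (y : Fin m → ℝ) (u : Fin n) (v : Fin m) : ℝ :=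
  if |x u * y v| ≤ c then x u * y v else 0

/-- the light constant -/
def cL : ℝ := 7 + 36 * Real.exp 4

lemma sum_sq_prod {n m : ℕ} {x : Fin n → ℝ} {y : Fin m → ℝ} (hx : ∑ u, x u ^ 2 ≤ 1)
    (hy : ∑ v, y v ^ 2 ≤ 1) : ∑ u, ∑ v, (x u * y v) ^ 2 ≤ 1 := by
  have : ∑ u, ∑ v, (x u * y v) ^ 2 = (∑ u, x u ^ 2) * ∑ v, y v ^ 2 := by
    simp only [mul_pow, Finset.sum_mul_sum]
  rw [this]
  exact mul_le_one₀ hx (Finset.sum_nonneg fun v _ => sq_nonneg _) hy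

lemma lightQ_abs {n m : ℕ} {c : ℝ} (hc : 0 ≤ c) (x : Fin n → ℝ) (y : Fin m → ℝ) (u v) :
    |lightQ c x y u v| ≤ c := by
  unfold lightQ
  split_ifs with h
  · exact h
  · simpa using hc

lemma lightQ_sum {n m : ℕ} {c : ℝ} (hc : 0 < c) {x : Fin n → ℝ} {y : Fin m → ℝ}
    (hx0 : ∑ u, x u = 0) (hx : ∑ u, x u ^ 2 ≤ 1)
    (hy : ∑ v, y v ^ 2 ≤ 1) : |∑ u, ∑ v, lightQ c x y u v| ≤ 1 / c := by
  have h0 : ∑ u, ∑ v, x u * y v = 0 := by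
    rw [← Finset.sum_mul_sum, hx0, zero_mul]
  have h1 : ∑ u, ∑ v, lightQ c x y u v = - ∑ u, ∑ v, (x u * y v - lightQ c x y u v) := by
    simp only [Finset.sum_sub_distrib, h0]; ring
  rw [h1, abs_neg]
  refine (Finset.abs_sum_le_sum_abs _ _).trans ?_
  have h2 : ∀ u v, |x u * y v - lightQ c x y u v| ≤ (x u * y v) ^ 2 / c := by
    intro u v
    unfold lightQ
    split_ifs with h
    · simp; positivity
    · push Not at h
      rw [sub_zero, le_div_iff₀ hc, ← sq_abs]
      nlinarith [abs_nonneg (x u * y v)]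
  calc _ ≤ ∑ u, ∑ v, (x u * y v) ^ 2 / c :=
        Finset.sum_le_sum fun u _ => (Finset.abs_sum_le_sum_abs _ _).trans
          (Finset.sum_le_sum fun v _ => h2 u v)
    _ = (∑ u, ∑ v, (x u * y v) ^ 2) / c := by simp only [Finset.sum_div]
    _ ≤ _ := by
        gcongr; exact sum_sq_prod hx hy

lemma lightQ_sum_abs {n m : ℕ} {c : ℝ} {x : Fin n → ℝ} {y : Fin m → ℝ}
    (hx : ∑ u, x u ^ 2 ≤ 1)
    (hy : ∑ v, y v ^ 2 ≤ 1) : ∑ u, ∑ v, |lightQ c x y u v| ≤ √(n * m) := by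
  apply Real.le_sqrt_of_sq_le
  have h1 : ∑ u, ∑ v, |lightQ c x y u v| ≤ ∑ u, ∑ v, |x u * y v| := by
    refine Finset.sum_le_sum fun u _ => Finset.sum_le_sum fun v _ => ?_
    unfold lightQ
    split_ifs
    · exact le_rfl
    · rw [abs_zero]; positivity
  have h0 : 0 ≤ ∑ u, ∑ v, |lightQ c x y u v| :=
    Finset.sum_nonneg fun u _ => Finset.sum_nonneg fun v _ => abs_nonneg _
  refine (pow_le_pow_left₀ h0 h1 2).trans ?_
  rw [← Fintype.sum_prod_type']
  refine (sq_sum_le_card_mul_sum_sq (s := Finset.univ)).trans ?_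
  have h2 := sum_sq_prod hx hy
  rw [← Fintype.sum_prod_type'] at h2
  simp only [sq_abs, Finset.card_univ, Fintype.card_prod, Fintype.card_fin, Nat.cast_mul]
  exact mul_le_of_le_one_right (by positivity) h2

lemma lightQ_sq {n m : ℕ} {c : ℝ} {x : Fin n → ℝ} {y : Fin m → ℝ}
    (hx : ∑ u, x u ^ 2 ≤ 1)
    (hy : ∑ v, y v ^ 2 ≤ 1) : ∑ u, ∑ v, lightQ c x y u v ^ 2 ≤ 1 := by
  refine le_trans ?_ (sum_sq_prod hx hy)
  refine Finset.sum_le_sum fun u _ => Finset.sum_le_sum fun v _ => ?_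
  unfold lightQ
  split_ifs
  · exact le_rfl
  · simp; positivity

lemma light_tail {n m d₁ d₂ : ℕ} (hn : 0 < n) (hm : 0 < m) (hd : 0 < d₁) (hd2 : 0 < d₂)
    (hnd : n * d₁ = m * d₂) (h21 : d₂ ≤ d₁)
    (h4 : 4 * d₂ ≤ n) (hcube : d₂ ^ 3 ≤ n ^ 2) {x : Fin n → ℝ} {y : Fin m → ℝ}
    (hx0 : ∑ u, x u = 0) (hx : ∑ u, x u ^ 2 ≤ 1)
    (hy : ∑ v, y v ^ 2 ≤ 1) :
    (((BBG n m d₁ d₂).filter fun X => cL * √d₁ ≤ lin (lightQ (√d₁ / m) x y) X).card : ℝ) ≤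
      Real.exp (-5 * m) * (BBG n m d₁ d₂).card := by
  have hn' : (0 : ℝ) < n := by exact_mod_cast hn
  have hm' : (0 : ℝ) < m := by exact_mod_cast hm
  have hd' : (0 : ℝ) < d₁ := by exact_mod_cast hd
  have hd2' : (0 : ℝ) < d₂ := by exact_mod_cast hd2
  have hnd' : (n : ℝ) * d₁ = m * d₂ := by exact_mod_cast hnd
  have hcube' : (d₂ : ℝ) ^ 3 ≤ n ^ 2 := by exact_mod_cast hcube
  set s := √(d₁ : ℝ) with hs
  have hs0 : 0 < s := Real.sqrt_pos.2 hd'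
  have hss : s ^ 2 = d₁ := Real.sq_sqrt hd'.le
  have hp : (d₂ / n : ℝ) = d₁ / m := by
    rw [div_eq_div_iff hn'.ne' hm'.ne']; linarith
  have hc : 0 < s / m := by positivity
  have T := tilt (m := m) hn hd hd2 h21 h4 (Q := lightQ (s / m) x y) (θ := m / s) hc.le
    (by positivity) (lightQ_abs hc.le x y)
  have hρ : 4 * (m / s) * (s / m) = 4 := by field_simp
  rw [hρ] at T
  have hW0 : 0 ≤ ∑ X ∈ BBG n m d₁ d₂, wt (m / s) (lightQ (s / m) x y) X :=
    Finset.sum_nonneg fun X _ => (wt_pos _ _ X).le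
  have A1 : (d₂ / n : ℝ) * |∑ u, ∑ v, lightQ (s / m) x y u v| ≤ s := by
    have := lightQ_sum hc hx0 hx hy
    calc _ ≤ (d₂ / n : ℝ) * (1 / (s / m)) := by gcongr
      _ = s := by rw [hp, ← hss]; field_simp
  have A2 : (d₂ / n : ℝ) ^ 2 * (∑ u, ∑ v, |lightQ (s / m) x y u v|) ≤ s := by
    have := lightQ_sum_abs (c := s / m) hx hy
    calc _ ≤ (d₂ / n : ℝ) ^ 2 * √(n * m) := by gcongr
      _ ≤ s := by
        rw [hs]
        apply Real.le_sqrt_of_sq_le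
        rw [mul_pow, Real.sq_sqrt (by positivity)]
        have e : ((d₂ / n : ℝ) ^ 2) ^ 2 * (n * m) = (d₂ ^ 3 / n ^ 2) * ((d₂ / n) * m) := by
          field_simp
        rw [e]
        have e2 : (d₂ / n : ℝ) * m = d₁ := by rw [hp]; field_simp
        rw [e2]
        refine mul_le_of_le_one_left hd'.le ?_
        rw [div_le_one (by positivity)]
        exact hcube'
  have A3 : (m / s) * (d₂ / n : ℝ) * (∑ u, ∑ v, lightQ (s / m) x y u v ^ 2) ≤ s := by
    have := lightQ_sq (c := s / m) hx hy
    calc _ ≤ (m / s) * (d₂ / n : ℝ) * 1 := by gcongr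
      _ = s := by rw [hp, ← hss]; field_simp
  have T2 : ∑ X ∈ BBG n m d₁ d₂, lin (lightQ (s / m) x y) X * wt (m / s) (lightQ (s / m) x y) X ≤
      ((cL - 5) * s) * ∑ X ∈ BBG n m d₁ d₂, wt (m / s) (lightQ (s / m) x y) X := by
    refine T.trans (mul_le_mul_of_nonneg_right ?_ hW0)
    have he := Real.exp_pos 4
    unfold cL
    nlinarith
  refine (chernoff (t := cL * s) (by positivity) T2).trans (le_of_eq ?_)
  congr 2
  field_simp
  ring

/-- edge count between sets -/
def ecnt {n m : ℕ} (S : Finset (Fin n)) (T : Finset (Fin m)) (X : Fin n → Fin m → Bool) : ℝ :=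
  ∑ u ∈ S, ∑ v ∈ T, ind X u v

lemma ecnt_tail {n m d₁ d₂ : ℕ} (hn : 0 < n) (hd : 0 < d₁)
    (h4 : 4 * d₂ ≤ n) (S : Finset (Fin n)) (T : Finset (Fin m)) (μ e : ℝ) (hμ : 0 < μ)
    (hμe : μ = (d₂ / n : ℝ) * S.card * T.card) (he : 16 * μ ≤ e) :
    (((BBG n m d₁ d₂).filter fun X => e ≤ ecnt S T X).card : ℝ) ≤
      Real.exp (- (e * Real.log (e / μ)) / 16) * (BBG n m d₁ d₂).card := by
  set Q : Fin n → Fin m → ℝ := fun u v => if u ∈ S then (if v ∈ T then 1 else 0) else 0 with hQ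
  have hlin : ∀ X, lin Q X = ecnt S T X := by
    intro X
    simp [lin, hQ, ecnt, ite_mul, Finset.sum_ite_mem]
  have hQ1 : ∀ u v, |Q u v| ≤ 1 := by
    intro u v; simp only [hQ]; split_ifs <;> simp
  have hQ0 : ∀ u v, 0 ≤ Q u v := by
    intro u v; simp only [hQ]; split_ifs <;> simp
  have hQs : ∑ u, ∑ v, Q u v = S.card * T.card := by
    simp [hQ, Finset.sum_ite_mem]
  set r := e / μ with hr
  have hr16 : 16 ≤ r := by rw [hr, le_div_iff₀ hμ]; exact he
  have hel : e = r * μ := by rw [hr]; field_simp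
  set θ := Real.log (r / 4) / 4 with hθ
  have hlog : Real.log r ≤ 2 * Real.log (r / 4) := by
    have : Real.log r ≤ Real.log ((r / 4) ^ 2) := by
      apply Real.log_le_log (by linarith)
      nlinarith
    rwa [Real.log_pow] at this
  have hlr : 0 ≤ Real.log r := Real.log_nonneg (by linarith)
  have hθ0 : 0 ≤ θ := by rw [hθ]; linarith
  have h := sum_lin_wt (d₁ := d₁) hn hd h4 hθ0 hQ1 Q hQ0
  have hexp : Real.exp (4 * θ * 1) = r / 4 := by
    have : 4 * θ * 1 = Real.log (r / 4) := by rw [hθ]; ring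
    rw [this, Real.exp_log (by linarith)]
  rw [hexp, hQs] at h
  have h2 := chernoff (t := e) hθ0 h
  simp only [hlin] at h2
  refine h2.trans ?_
  refine mul_le_mul_of_nonneg_right (Real.exp_le_exp.2 ?_) (Nat.cast_nonneg _)
  have e1 : 2 * (r / 4) * (d₂ / n : ℝ) * (S.card * T.card) = e / 2 := by
    rw [hel, hμe]; ring
  rw [e1, hθ]
  have : 0 ≤ e := by linarith
  nlinarith [mul_le_mul_of_nonneg_left hlog this]


/-- `x log (e m / x)` -/
def phi (m x : ℝ) : ℝ := x * (1 + Real.log (m / x))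

lemma phi_mono {m x y : ℝ} (hx : 0 < x) (hxy : x ≤ y) (hy : y ≤ m) : phi m x ≤ phi m y := by
  have hy0 : 0 < y := hx.trans_le hxy
  have hm : 0 < m := hy0.trans_le hy
  unfold phi
  have e : Real.log (m / x) = Real.log (m / y) + Real.log (y / x) := by
    rw [← Real.log_mul (by positivity) (by positivity)]; congr 1; field_simp
  have h1 : Real.log (y / x) ≤ y / x - 1 := Real.log_le_sub_one_of_pos (by positivity)
  have h2 : x * Real.log (y / x) ≤ y - x := by
    have := mul_le_mul_of_nonneg_left h1 hx.le
    have e2 : x * (y / x - 1) = y - x := by field_simp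
    linarith
  have h3 : 0 ≤ Real.log (m / y) := Real.log_nonneg (by rwa [le_div_iff₀ hy0, one_mul])
  rw [e]
  nlinarith [mul_le_mul_of_nonneg_right hxy h3]

lemma choose_phi {n m k : ℕ} (hk : 0 < k) (hm : 0 < m) (hnm : n ≤ m) :
    (n.choose k : ℝ) * Real.exp (-phi m k) ≤ 1 := by
  have hk' : (0 : ℝ) < k := by exact_mod_cast hk
  have hm' : (0 : ℝ) < m := by exact_mod_cast hm
  have hnm' : (n : ℝ) ≤ m := by exact_mod_cast hnm
  have e : Real.exp (-phi m k) = Real.exp (-k) * ((k : ℝ) / m) ^ k := by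
    have : ((k : ℝ) / m) ^ k = Real.exp (k * Real.log (k / m)) := by
      rw [mul_comm, Real.exp_mul, Real.exp_log (by positivity), Real.rpow_natCast]
    rw [this, ← Real.exp_add]
    congr 1
    unfold phi
    have : Real.log ((m : ℝ) / k) = - Real.log (k / m) := by
      rw [← Real.log_inv, inv_div]
    rw [this]; ring
  rw [e]
  rcases lt_or_ge n k with h | h
  · rw [Nat.choose_eq_zero_of_lt h]; simp
  have h1 : (n.choose k : ℝ) * ((k : ℝ) / m) ^ k ≤ ((k : ℝ) / m + 1) ^ n := by
    rw [add_pow]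
    have := Finset.single_le_sum (f := fun i => ((k : ℝ) / m) ^ i * 1 ^ (n - i) * (n.choose i))
      (fun i _ => by positivity) (Finset.mem_range.2 (Nat.lt_succ_of_le h))
    refine le_trans (le_of_eq ?_) this
    simp; ring
  have h2 : ((k : ℝ) / m + 1) ^ n ≤ Real.exp k := by
    have h3 : (k : ℝ) / m + 1 ≤ Real.exp (k / m) := Real.add_one_le_exp _
    calc _ ≤ Real.exp (k / m) ^ n := pow_le_pow_left₀ (by positivity) h3 n
      _ = Real.exp (n * (k / m)) := by rw [Real.exp_nat_mul]
      _ ≤ _ := by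
        apply Real.exp_le_exp.2
        rw [← mul_div_assoc, div_le_iff₀ hm']
        nlinarith
  calc _ = Real.exp (-k) * ((n.choose k : ℝ) * ((k : ℝ) / m) ^ k) := by ring
    _ ≤ Real.exp (-k) * Real.exp k := by
      refine mul_le_mul_of_nonneg_left (h1.trans h2) (Real.exp_pos _).le
    _ = 1 := by rw [← Real.exp_add]; simp

lemma sum_sets {n m : ℕ} (hm : 0 < m) (hnm : n ≤ m) :
    ∑ S : Finset (Fin n), (if S.card = 0 then 0 else Real.exp (-phi m S.card)) ≤ n := by
  have h := Finset.sum_powerset_apply_card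
    (fun k : ℕ => if k = 0 then (0 : ℝ) else Real.exp (-phi m k)) (x := (Finset.univ : Finset (Fin n)))
  rw [Finset.powerset_univ] at h
  rw [h, Finset.sum_range_succ']
  simp only [Finset.card_univ, Fintype.card_fin, nsmul_eq_mul]
  simp only [Nat.add_eq_zero_iff, one_ne_zero, and_false, if_false, if_true, mul_zero, add_zero]
  refine (Finset.sum_le_sum fun k _ => choose_phi (Nat.succ_pos k) hm hnm).trans ?_
  simp

/-- discrepancy property -/
def Disc {n m : ℕ} (d₂ : ℕ) (κ : ℝ) (X : Fin n → Fin m → Bool) : Prop :=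
  ∀ (S : Finset (Fin n)) (T : Finset (Fin m)), S.card ≠ 0 → T.card ≠ 0 →
    16 * ((d₂ / n : ℝ) * S.card * T.card) ≤ ecnt S T X →
    ecnt S T X * Real.log (ecnt S T X / ((d₂ / n : ℝ) * S.card * T.card)) ≤
      κ * phi m (max S.card T.card : ℝ)

lemma disc_single {n m d₁ d₂ : ℕ} (hn : 0 < n) (hd : 0 < d₁)
    (h4 : 4 * d₂ ≤ n) (S : Finset (Fin n)) (T : Finset (Fin m)) (μ B : ℝ) (hμ : 0 < μ)
    (hμe : μ = (d₂ / n : ℝ) * S.card * T.card) :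
    (((BBG n m d₁ d₂).filter fun X => 16 * μ ≤ ecnt S T X ∧
      B < ecnt S T X * Real.log (ecnt S T X / μ)).card : ℝ) ≤
      Real.exp (- B / 16) * (BBG n m d₁ d₂).card := by
  set F := (BBG n m d₁ d₂).filter fun X => 16 * μ ≤ ecnt S T X ∧
      B < ecnt S T X * Real.log (ecnt S T X / μ) with hF
  rcases F.eq_empty_or_nonempty with h | h
  · rw [h]; simp; positivity
  obtain ⟨X₀, hX₀, hmin⟩ := Finset.exists_min_image F (fun X => ecnt S T X) h
  have hX₀' := (Finset.mem_filter.1 hX₀).2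
  have h1 := ecnt_tail (m := m) hn hd h4 S T μ (ecnt S T X₀) hμ hμe hX₀'.1
  have h2 : F ⊆ (BBG n m d₁ d₂).filter fun X => ecnt S T X₀ ≤ ecnt S T X := by
    intro X hX
    rw [Finset.mem_filter]
    exact ⟨(Finset.mem_filter.1 hX).1, hmin X hX⟩
  have h3 : (F.card : ℝ) ≤ ((BBG n m d₁ d₂).filter fun X => ecnt S T X₀ ≤ ecnt S T X).card := by
    exact_mod_cast Finset.card_le_card h2
  refine h3.trans (h1.trans ?_)
  refine mul_le_mul_of_nonneg_right (Real.exp_le_exp.2 ?_) (Nat.cast_nonneg _)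
  linarith [hX₀'.2]

lemma disc_prob {n m d₁ d₂ : ℕ} (hn : 0 < n) (hm : 0 < m) (hd : 0 < d₁) (hd2 : 0 < d₂)
    (hnm : n ≤ m) (h4 : 4 * d₂ ≤ n) (K : ℝ) (hK : 0 < K) :
    (((BBG n m d₁ d₂).filter fun X => ¬ Disc d₂ (16 * (K + 4)) X).card : ℝ) ≤
      (m : ℝ) ^ (-K) * (BBG n m d₁ d₂).card := by
  have hn' : (0 : ℝ) < n := by exact_mod_cast hn
  have hm' : (1 : ℝ) ≤ m := by exact_mod_cast hm
  have hnm' : (n : ℝ) ≤ m := by exact_mod_cast hnm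
  have hd2' : (0 : ℝ) < d₂ := by exact_mod_cast hd2
  set N : ℝ := ((BBG n m d₁ d₂).card : ℝ) with hN
  have hN0 : 0 ≤ N := Nat.cast_nonneg _
  set bad : Finset (Fin n) → Finset (Fin m) → Finset (Fin n → Fin m → Bool) := fun S T =>
    if S.card ≠ 0 ∧ T.card ≠ 0 then
      (BBG n m d₁ d₂).filter fun X => 16 * ((d₂ / n : ℝ) * S.card * T.card) ≤ ecnt S T X ∧
      16 * (K + 4) * phi m (max S.card T.card : ℝ) <
        ecnt S T X * Real.log (ecnt S T X / ((d₂ / n : ℝ) * S.card * T.card))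
    else ∅ with hbad
  have hsub : ((BBG n m d₁ d₂).filter fun X => ¬ Disc d₂ (16 * (K + 4)) X) ⊆
      Finset.univ.biUnion fun S => Finset.univ.biUnion fun T => bad S T := by
    intro X hX
    rw [Finset.mem_filter] at hX
    obtain ⟨hX1, hX2⟩ := hX
    unfold Disc at hX2
    push Not at hX2
    obtain ⟨S, T, hS, hT, h1, h2⟩ := hX2
    simp only [Finset.mem_biUnion, Finset.mem_univ, true_and]
    refine ⟨S, T, ?_⟩
    simp only [hbad]
    rw [if_pos ⟨hS, hT⟩, Finset.mem_filter]
    exact ⟨hX1, h1, h2⟩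
  have hb : ∀ S T, ((bad S T).card : ℝ) ≤
      (m : ℝ) ^ (-(K + 2)) * ((if S.card = 0 then 0 else Real.exp (-phi m S.card)) *
        (if T.card = 0 then 0 else Real.exp (-phi m T.card))) * N := by
    intro S T
    by_cases h : S.card ≠ 0 ∧ T.card ≠ 0
    · simp only [hbad]
      rw [if_pos h, if_neg h.1, if_neg h.2]
      have hs : (1 : ℝ) ≤ S.card := by exact_mod_cast Nat.one_le_iff_ne_zero.2 h.1
      have ht : (1 : ℝ) ≤ T.card := by exact_mod_cast Nat.one_le_iff_ne_zero.2 h.2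
      have hs2 : (S.card : ℝ) ≤ n := by
        have := S.card_le_univ; rw [Fintype.card_fin] at this; exact_mod_cast this
      have ht2 : (T.card : ℝ) ≤ m := by
        have := T.card_le_univ; rw [Fintype.card_fin] at this; exact_mod_cast this
      refine (disc_single (m := m) hn hd h4 S T _ _ (by positivity) rfl).trans ?_
      refine mul_le_mul_of_nonneg_right ?_ hN0
      have hmx : max (S.card : ℝ) T.card ≤ m := max_le (hs2.trans hnm') ht2
      have p1 : phi m S.card ≤ phi m (max S.card T.card : ℝ) :=
        phi_mono (by linarith) (le_max_left _ _) hmx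
      have p2 : phi m T.card ≤ phi m (max S.card T.card : ℝ) :=
        phi_mono (by linarith) (le_max_right _ _) hmx
      have p3 : phi m 1 ≤ phi m (max S.card T.card : ℝ) :=
        phi_mono (by linarith) (hs.trans (le_max_left _ _)) hmx
      have p4 : Real.log m ≤ phi m 1 := by unfold phi; simp
      rw [Real.rpow_def_of_pos (by linarith), ← Real.exp_add, ← Real.exp_add]
      apply Real.exp_le_exp.2
      nlinarith
    · simp only [hbad]
      rw [if_neg h]
      simp only [Finset.card_empty, Nat.cast_zero]
      refine mul_nonneg (mul_nonneg (by positivity) (mul_nonneg ?_ ?_)) hN0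
      · split_ifs
        · exact le_rfl
        · exact (Real.exp_pos _).le
      · split_ifs
        · exact le_rfl
        · exact (Real.exp_pos _).le
  have hcard : (((BBG n m d₁ d₂).filter fun X => ¬ Disc d₂ (16 * (K + 4)) X).card : ℝ) ≤
      ∑ S, ∑ T, ((bad S T).card : ℝ) := by
    have h1 := (Finset.card_le_card hsub).trans (Finset.card_biUnion_le.trans
      (Finset.sum_le_sum fun S _ => Finset.card_biUnion_le))
    exact_mod_cast h1
  refine hcard.trans ((Finset.sum_le_sum fun S _ => Finset.sum_le_sum fun T _ => hb S T).trans ?_)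
  simp only [← Finset.sum_mul, ← Finset.mul_sum]
  refine mul_le_mul_of_nonneg_right ?_ hN0
  have hA := sum_sets (n := n) (m := m) hm hnm
  have hB := sum_sets (n := m) (m := m) hm le_rfl
  have hB0 : 0 ≤ ∑ S : Finset (Fin m), (if S.card = 0 then 0 else Real.exp (-phi m S.card)) :=
    Finset.sum_nonneg fun S _ => by
      split_ifs
      · exact le_rfl
      · exact (Real.exp_pos _).le
  have hAB := mul_le_mul hA hB hB0 hn'.le
  calc _ ≤ (m : ℝ) ^ (-(K + 2)) * (n * m) := by
        refine mul_le_mul_of_nonneg_left hAB (by positivity)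
    _ ≤ (m : ℝ) ^ (-(K + 2)) * (m * m) := by gcongr
    _ = (m : ℝ) ^ (-(K + 2)) * (m : ℝ) ^ (2 : ℝ) := by
        congr 1; norm_num [sq]
    _ = _ := by
        rw [← Real.rpow_add (by linarith)]; congr 1; ring


/-- per-pair bound -/
def pb (D κ p N c ξ α η β : ℝ) : ℝ :=
  16 * D * α * β + 4 * κ * c * β * (ξ / η) + 4 * p * α / (ξ * η) +
    (if D * ξ ≤ 2 * √N * p then 4 * κ * c * √N * β * ξ else 0)

lemma pb_nonneg {D κ p N c ξ α η β : ℝ} (hD : 0 ≤ D) (hκ : 0 ≤ κ) (hp : 0 ≤ p) (hc : 0 ≤ c)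
    (hξ : 0 ≤ ξ) (hα : 0 ≤ α) (hη : 0 ≤ η) (hβ : 0 ≤ β) : 0 ≤ pb D κ p N c ξ α η β := by
  unfold pb
  have : 0 ≤ (if D * ξ ≤ 2 * √N * p then 4 * κ * c * √N * β * ξ else 0) := by
    split_ifs <;> positivity
  positivity

set_option maxHeartbeats 1000000 in
lemma pair_bound {D κ p N c ξ η s t e a : ℝ} (hD : 0 < D) (hκ : 0 < κ) (hp : 0 < p)
    (hc : 0 < c) (hξ : 0 < ξ) (hη : 0 < η) (hs : 0 < s) (ht : 0 < t) (htN : t ≤ N) (he : 0 ≤ e)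
    (hpa : p = D * a) (ha : a ≤ ξ * η) (hβ : t * η ^ 2 ≤ 4)
    (H : 16 * (p * s * t) ≤ e → e * Real.log (e / (p * s * t)) ≤ κ * c * phi N t) :
    e * (ξ * η) ≤ pb D κ p N c ξ (s * ξ ^ 2) η (t * η ^ 2) := by
  have hN : 0 < N := ht.trans_le htN
  set μ := p * s * t with hμ
  have hμ0 : 0 < μ := by positivity
  have hpD : p ≤ D * (ξ * η) := by rw [hpa]; gcongr
  have t1 : 0 ≤ 16 * D * (s * ξ ^ 2) * (t * η ^ 2) := by positivity
  have t2 : 0 ≤ 4 * κ * c * (t * η ^ 2) * (ξ / η) := by positivity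
  have t3 : 0 ≤ 4 * p * (s * ξ ^ 2) / (ξ * η) := by positivity
  have t4 : 0 ≤ (if D * ξ ≤ 2 * √N * p then 4 * κ * c * √N * (t * η ^ 2) * ξ else 0) := by
    split_ifs <;> positivity
  unfold pb
  rcases lt_or_ge e (16 * μ) with h | h
  · have : e * (ξ * η) ≤ 16 * D * (s * ξ ^ 2) * (t * η ^ 2) := by
      calc e * (ξ * η) ≤ 16 * μ * (ξ * η) := by gcongr
        _ = 16 * (s * t) * (ξ * η) * p := by rw [hμ]; ring
        _ ≤ 16 * (s * t) * (ξ * η) * (D * (ξ * η)) := by gcongr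
        _ = _ := by ring
    linarith
  specialize H h
  set r := e / μ with hr
  have hr16 : 16 ≤ r := by rw [hr, le_div_iff₀ hμ0]; exact h
  have hel : e = r * μ := by rw [hr]; field_simp
  set L := 1 + Real.log (N / t) with hL
  have hNt : 1 ≤ N / t := by rw [le_div_iff₀ ht]; linarith
  have hL1 : 1 ≤ L := by
    have := Real.log_nonneg hNt
    linarith
  have hphi : phi N t = t * L := rfl
  rw [hphi] at H
  rcases le_or_gt L (4 * Real.log r) with h1 | h1
  · have h2 : e * L ≤ 4 * κ * c * t * L := by
      have := mul_le_mul_of_nonneg_left h1 he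
      calc e * L ≤ e * (4 * Real.log r) := this
        _ = 4 * (e * Real.log r) := by ring
        _ ≤ 4 * (κ * c * (t * L)) := by linarith
        _ = _ := by ring
    have h3 : e ≤ 4 * κ * c * t := le_of_mul_le_mul_right h2 (by linarith)
    have : e * (ξ * η) ≤ 4 * κ * c * (t * η ^ 2) * (ξ / η) := by
      calc _ ≤ 4 * κ * c * t * (ξ * η) := by gcongr
        _ = _ := by field_simp
    linarith
  have hr0 : 0 < r := by linarith
  have hr4 : r ^ 4 ≤ 3 * (N / t) := by
    have h2 : Real.log (r ^ 4) ≤ Real.log (Real.exp 1 * (N / t)) := by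
      rw [Real.log_pow, Real.log_mul (Real.exp_pos 1).ne' (by positivity), Real.log_exp]
      push_cast; linarith
    have h3 := (Real.log_le_log_iff (by positivity) (by positivity)).1 h2
    have h4 := Real.exp_one_lt_d9
    refine h3.trans ?_
    gcongr
    linarith
  rcases lt_or_ge (N * t * η ^ 4) 1 with h2 | h2
  · have h3 : r * (t * η ^ 2) ≤ 4 := by
      have h5 : (r * (t * η ^ 2)) ^ 4 ≤ 4 ^ 4 := by
        calc (r * (t * η ^ 2)) ^ 4 = r ^ 4 * (t * η ^ 2) ^ 4 := by ring
          _ ≤ 3 * (N / t) * (t * η ^ 2) ^ 4 := by gcongr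
          _ = 3 * (N * t * η ^ 4) * (t * η ^ 2) ^ 2 := by field_simp
          _ ≤ 3 * 1 * 4 ^ 2 := by gcongr
          _ ≤ 4 ^ 4 := by norm_num
      exact le_of_pow_le_pow_left₀ (by norm_num) (by norm_num) h5
    have : e * (ξ * η) ≤ 4 * p * (s * ξ ^ 2) / (ξ * η) := by
      calc e * (ξ * η) = (r * (t * η ^ 2)) * (p * (s * ξ ^ 2) / (ξ * η)) := by
            rw [hel, hμ]; field_simp
        _ ≤ 4 * (p * (s * ξ ^ 2) / (ξ * η)) := by gcongr
        _ = _ := by ring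
    linarith
  have hsN : 0 < √N := Real.sqrt_pos.2 hN
  have hsN2 : √N ^ 2 = N := Real.sq_sqrt hN.le
  have h3 : N / t ≤ (√N * η) ^ 4 := by
    have : (√N * η) ^ 4 = N ^ 2 * η ^ 4 := by
      calc _ = (√N ^ 2) ^ 2 * η ^ 4 := by ring
        _ = _ := by rw [hsN2]
    rw [this, div_le_iff₀ ht]
    calc N = N * 1 := by ring
      _ ≤ N * (N * t * η ^ 4) := by gcongr
      _ = _ := by ring
  have h5 : r ≤ 2 * (√N * η) := by
    refine le_of_pow_le_pow_left₀ (n := 4) (by norm_num) (by positivity) ?_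
    calc r ^ 4 ≤ 3 * (N / t) := hr4
      _ ≤ 3 * (√N * η) ^ 4 := by gcongr
      _ ≤ (2 * (√N * η)) ^ 4 := by
        have h40 : (0 : ℝ) ≤ (√N * η) ^ 4 := by positivity
        have h41 : (2 * (√N * η)) ^ 4 = 16 * (√N * η) ^ 4 := by ring
        rw [h41]; linarith
  rcases le_or_gt (r * p) (D * (ξ * η)) with h6 | h6
  · have : e * (ξ * η) ≤ 16 * D * (s * ξ ^ 2) * (t * η ^ 2) := by
      calc e * (ξ * η) = (r * p) * (s * t * (ξ * η)) := by rw [hel, hμ]; ring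
        _ ≤ (D * (ξ * η)) * (s * t * (ξ * η)) := by gcongr
        _ = 1 * D * (s * ξ ^ 2) * (t * η ^ 2) := by ring
        _ ≤ _ := by gcongr; norm_num
    linarith
  have h7 : D * ξ ≤ 2 * √N * p := by
    refine le_of_mul_le_mul_right ?_ hη
    have := mul_le_mul_of_nonneg_right h5 hp.le
    calc D * ξ * η = D * (ξ * η) := by ring
      _ ≤ r * p := h6.le
      _ ≤ 2 * (√N * η) * p := this
      _ = _ := by ring
  rw [if_pos h7]
  have h8 : 1 ≤ Real.log r := by
    rw [Real.le_log_iff_exp_le hr0]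
    have h4 := Real.exp_one_lt_d9
    linarith
  have h9 : e ≤ κ * c * (t * L) :=
    (le_mul_of_one_le_right he h8).trans H
  have h10 : L ≤ 4 * (√N * η) := by
    have h11 : Real.log (N / t) ≤ 4 * Real.log (√N * η) := by
      have := Real.log_le_log (by positivity) h3
      rwa [Real.log_pow] at this
    have h12 := Real.log_le_sub_one_of_pos (show 0 < √N * η by positivity)
    linarith
  have : e * (ξ * η) ≤ 4 * κ * c * √N * (t * η ^ 2) * ξ := by
    calc e * (ξ * η) ≤ κ * c * (t * (4 * (√N * η))) * (ξ * η) := by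
          refine mul_le_mul_of_nonneg_right (h9.trans ?_) (by positivity)
          gcongr
      _ = _ := by ring
  linarith

lemma geo1 (L : ℕ) : ∀ R : ℝ, 0 ≤ R →
    ∑ k ∈ Finset.range L, (if (1 / 2 : ℝ) ^ k ≤ R then (1 / 2 : ℝ) ^ k else 0) ≤ 2 * R := by
  have all : ∀ L : ℕ, ∑ k ∈ Finset.range L, (1 / 2 : ℝ) ^ k ≤ 2 := by
    intro L
    have : ∑ k ∈ Finset.range L, (1 / 2 : ℝ) ^ k = 2 - 2 * (1 / 2) ^ L := by
      induction L with
      | zero => simp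
      | succ L ih => rw [Finset.sum_range_succ, ih, pow_succ]; ring
    rw [this]
    have : (0 : ℝ) ≤ (1 / 2) ^ L := by positivity
    linarith
  induction L with
  | zero => intro R hR; simpa using hR
  | succ L ih =>
    intro R hR
    rcases le_or_gt 1 R with h | h
    · calc _ ≤ ∑ k ∈ Finset.range (L + 1), (1 / 2 : ℝ) ^ k := by
            refine Finset.sum_le_sum fun k _ => ?_
            split_ifs
            · exact le_rfl
            · positivity
        _ ≤ 2 := all _
        _ ≤ _ := by linarith
    · rw [Finset.sum_range_succ']
      have h0 : ¬ ((1 / 2 : ℝ) ^ 0 ≤ R) := by simpa using h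
      rw [if_neg h0, add_zero]
      have e : ∀ k : ℕ, (if (1 / 2 : ℝ) ^ (k + 1) ≤ R then (1 / 2 : ℝ) ^ (k + 1) else 0) =
          (1 / 2) * (if (1 / 2 : ℝ) ^ k ≤ 2 * R then (1 / 2 : ℝ) ^ k else 0) := by
        intro k
        have : (1 / 2 : ℝ) ^ (k + 1) ≤ R ↔ (1 / 2 : ℝ) ^ k ≤ 2 * R := by
          rw [pow_succ]; constructor <;> intro h <;> linarith
        simp only [this]
        split_ifs
        · rw [pow_succ]; ring
        · simp
      simp only [e, ← Finset.mul_sum]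
      have := ih (2 * R) (by linarith)
      linarith

lemma geo2 (L : ℕ) (R : ℝ) (hR : 0 ≤ R) :
    ∑ k ∈ Finset.range L, (if (2 : ℝ) ^ k ≤ R then (2 : ℝ) ^ k else 0) ≤ 2 * R := by
  have all : ∀ L : ℕ, ∑ k ∈ Finset.range L, (2 : ℝ) ^ k = 2 ^ L - 1 := by
    intro L
    induction L with
    | zero => simp
    | succ L ih => rw [Finset.sum_range_succ, ih, pow_succ]; ring
  induction L with
  | zero => simpa using hR
  | succ L ih =>
    by_cases h : (2 : ℝ) ^ L ≤ R
    · calc _ ≤ ∑ k ∈ Finset.range (L + 1), (2 : ℝ) ^ k := by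
            refine Finset.sum_le_sum fun k _ => ?_
            split_ifs
            · exact le_rfl
            · positivity
        _ = _ := all _
        _ ≤ _ := by rw [pow_succ]; linarith
    · rw [Finset.sum_range_succ, if_neg h, add_zero]; exact ih

lemma sum_pb (L : ℕ) {D κ p N c a : ℝ} (hD : 0 < D) (hκ : 0 < κ) (hp : 0 < p) (hN : 0 < N)
    (hc : 0 < c) (ha : 0 < a) (hpa : p = D * a) (hcN : c * N * p = D ^ 2)
    (α β : ℕ → ℝ) (hα : ∀ k, 0 ≤ α k) (hβ : ∀ k, 0 ≤ β k)
    (hα4 : ∑ k ∈ Finset.range L, α k ≤ 4) (hβ4 : ∑ k ∈ Finset.range L, β k ≤ 4)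
    (P : ℕ → ℕ → Prop)
    (hP : ∀ k l, P k l → a ≤ (1 / 2 : ℝ) ^ k * (1 / 2 : ℝ) ^ l ∧
      c * (1 / 2 : ℝ) ^ k ≤ 2 * (1 / 2 : ℝ) ^ l * D) :
    ∑ k ∈ Finset.range L, ∑ l ∈ Finset.range L,
      (if P k l then pb D κ p N c ((1 / 2 : ℝ) ^ k) (α k) ((1 / 2 : ℝ) ^ l) (β l) else 0) ≤
      (288 + 128 * κ) * D := by
  set z : ℕ → ℝ := fun k => (1 / 2 : ℝ) ^ k with hz
  have hz0 : ∀ k, 0 < z k := fun k => by simp only [hz]; positivity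
  have hsN : 0 < √N := Real.sqrt_pos.2 hN
  have hsN2 : √N ^ 2 = N := Real.sq_sqrt hN.le
  have pt : ∀ k l, (if P k l then pb D κ p N c (z k) (α k) (z l) (β l) else 0) ≤
      16 * D * (α k * β l)
      + (4 * κ * c * β l / z l) * (if z k ≤ 2 * z l * D / c then z k else 0)
      + (4 * p * α k / z k) * (if (2 : ℝ) ^ l ≤ z k / a then (2 : ℝ) ^ l else 0)
      + (4 * κ * c * √N * β l) * (if z k ≤ 2 * √N * p / D then z k else 0) := by
    intro k l
    have := hz0 k
    have := hz0 l
    have := hα k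
    have := hβ l
    have n1 : 0 ≤ 16 * D * (α k * β l) := by positivity
    have n2 : 0 ≤ (4 * κ * c * β l / z l) * (if z k ≤ 2 * z l * D / c then z k else 0) := by
      refine mul_nonneg (by positivity) ?_
      split_ifs <;> positivity
    have n3 : 0 ≤ (4 * p * α k / z k) * (if (2 : ℝ) ^ l ≤ z k / a then (2 : ℝ) ^ l else 0) := by
      refine mul_nonneg (by positivity) ?_
      split_ifs <;> positivity
    have n4 : 0 ≤ (4 * κ * c * √N * β l) * (if z k ≤ 2 * √N * p / D then z k else 0) := by
      refine mul_nonneg (by positivity) ?_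
      split_ifs <;> positivity
    by_cases h : P k l
    · obtain ⟨h1, h2⟩ := hP k l h
      rw [if_pos h]
      have hzl : (2 : ℝ) ^ l = (z l)⁻¹ := by simp [hz]
      have c2 : z k ≤ 2 * z l * D / c := by
        rw [le_div_iff₀ hc]; simp only [hz]; linarith
      have c3 : (2 : ℝ) ^ l ≤ z k / a := by
        rw [hzl, le_div_iff₀ ha, inv_mul_le_iff₀ (hz0 l), mul_comm]; exact h1
      rw [if_pos c2, if_pos c3]
      have c4 : (z k ≤ 2 * √N * p / D) ↔ D * z k ≤ 2 * √N * p := by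
        rw [le_div_iff₀ hD, mul_comm]
      unfold pb
      simp only [c4]
      rw [hzl]
      apply le_of_eq
      split_ifs
      · field_simp
      · field_simp
        ring
    · rw [if_neg h]
      linarith
  refine (Finset.sum_le_sum fun k _ => Finset.sum_le_sum fun l _ => pt k l).trans ?_
  simp only [Finset.sum_add_distrib]
  have hα0 : 0 ≤ ∑ k ∈ Finset.range L, α k := Finset.sum_nonneg fun k _ => hα k
  have hβ0 : 0 ≤ ∑ k ∈ Finset.range L, β k := Finset.sum_nonneg fun k _ => hβ k
  have s1 : ∑ k ∈ Finset.range L, ∑ l ∈ Finset.range L, 16 * D * (α k * β l) ≤ 256 * D := by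
    simp only [← Finset.mul_sum]
    rw [← Finset.sum_mul]
    have := mul_le_mul hα4 hβ4 hβ0 (by norm_num)
    nlinarith
  have s2 : ∑ k ∈ Finset.range L, ∑ l ∈ Finset.range L,
      (4 * κ * c * β l / z l) * (if z k ≤ 2 * z l * D / c then z k else 0) ≤ 64 * κ * D := by
    rw [Finset.sum_comm]
    have : ∀ l ∈ Finset.range L, ∑ k ∈ Finset.range L,
        (4 * κ * c * β l / z l) * (if z k ≤ 2 * z l * D / c then z k else 0) ≤
        16 * κ * D * β l := by
      intro l _
      have := hz0 l
      have := hβ l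
      rw [← Finset.mul_sum]
      have g := geo1 L (2 * z l * D / c) (by positivity)
      calc _ ≤ (4 * κ * c * β l / z l) * (2 * (2 * z l * D / c)) := by gcongr
        _ = _ := by field_simp; ring
    refine (Finset.sum_le_sum this).trans ?_
    rw [← Finset.mul_sum]
    calc _ ≤ 16 * κ * D * 4 := by gcongr
      _ = _ := by ring
  have s3 : ∑ k ∈ Finset.range L, ∑ l ∈ Finset.range L,
      (4 * p * α k / z k) * (if (2 : ℝ) ^ l ≤ z k / a then (2 : ℝ) ^ l else 0) ≤ 32 * D := by
    have : ∀ k ∈ Finset.range L, ∑ l ∈ Finset.range L,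
        (4 * p * α k / z k) * (if (2 : ℝ) ^ l ≤ z k / a then (2 : ℝ) ^ l else 0) ≤
        8 * D * α k := by
      intro k _
      have := hz0 k
      have := hα k
      rw [← Finset.mul_sum]
      have g := geo2 L (z k / a) (by positivity)
      calc _ ≤ (4 * p * α k / z k) * (2 * (z k / a)) := by gcongr
        _ = _ := by rw [hpa]; field_simp; ring
    refine (Finset.sum_le_sum this).trans ?_
    rw [← Finset.mul_sum]
    calc _ ≤ 8 * D * 4 := by gcongr
      _ = _ := by ring
  have s4 : ∑ k ∈ Finset.range L, ∑ l ∈ Finset.range L,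
      (4 * κ * c * √N * β l) * (if z k ≤ 2 * √N * p / D then z k else 0) ≤ 64 * κ * D := by
    rw [Finset.sum_comm]
    have : ∀ l ∈ Finset.range L, ∑ k ∈ Finset.range L,
        (4 * κ * c * √N * β l) * (if z k ≤ 2 * √N * p / D then z k else 0) ≤
        16 * κ * D * β l := by
      intro l _
      have := hβ l
      rw [← Finset.mul_sum]
      have g := geo1 L (2 * √N * p / D) (by positivity)
      calc _ ≤ (4 * κ * c * √N * β l) * (2 * (2 * √N * p / D)) := by gcongr
        _ = 16 * κ * β l * (c * (√N ^ 2) * p) / D := by ring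
        _ = _ := by rw [hsN2, hcN]; field_simp
    refine (Finset.sum_le_sum this).trans ?_
    rw [← Finset.mul_sum]
    calc _ ≤ 16 * κ * D * 4 := by gcongr
      _ = _ := by ring
  linarith


lemma exists_lev {ι : Type*} [Fintype ι] (x : ι → ℝ) (hx0 : ∀ u, 0 ≤ x u)
    (hx : ∑ u, x u ^ 2 ≤ 1) :
    ∃ k : ι → ℕ, ∀ u, 0 < x u → (1 / 2 : ℝ) ^ (k u + 1) < x u ∧ x u ≤ (1 / 2 : ℝ) ^ (k u) := by
  have h : ∀ u, ∃ k : ℕ, 0 < x u → (1 / 2 : ℝ) ^ (k + 1) < x u ∧ x u ≤ (1 / 2 : ℝ) ^ k := by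
    intro u
    by_cases h0 : 0 < x u
    · have h1 : x u ≤ 1 := by
        have : x u ^ 2 ≤ ∑ u, x u ^ 2 :=
          Finset.single_le_sum (f := fun u => x u ^ 2) (fun i _ => sq_nonneg _)
            (Finset.mem_univ u)
        nlinarith
      obtain ⟨k, h2, h3⟩ := exists_nat_pow_near_of_lt_one (x := x u) (y := (1 / 2 : ℝ)) h0 h1
        (by norm_num) (by norm_num)
      exact ⟨k, fun _ => ⟨h2, h3⟩⟩
    · exact ⟨0, fun h => absurd h h0⟩
  choose k hk using h
  exact ⟨k, hk⟩

def lev {ι : Type*} [Fintype ι] (x : ι → ℝ) (kx : ι → ℕ) (k : ℕ) : Finset ι :=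
  Finset.univ.filter fun u => 0 < x u ∧ kx u = k

lemma lev_sum {ι : Type*} [Fintype ι] (x : ι → ℝ) (kx : ι → ℕ)
    (hk : ∀ u, 0 < x u → (1 / 2 : ℝ) ^ (kx u + 1) < x u ∧ x u ≤ (1 / 2 : ℝ) ^ (kx u))
    (hx : ∑ u, x u ^ 2 ≤ 1) (L : ℕ) :
    ∑ k ∈ Finset.range L, ((lev x kx k).card : ℝ) * ((1 / 2 : ℝ) ^ k) ^ 2 ≤ 4 := by
  have h1 : ∀ k ∈ Finset.range L, ((lev x kx k).card : ℝ) * ((1 / 2 : ℝ) ^ k) ^ 2 ≤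
      ∑ u, if kx u = k then 4 * x u ^ 2 else 0 := by
    intro k _
    rw [← nsmul_eq_mul, ← Finset.sum_const, lev, Finset.sum_filter]
    refine Finset.sum_le_sum fun u _ => ?_
    by_cases h : kx u = k
    · subst h
      by_cases h0 : 0 < x u
      · simp only [h0, and_self, if_true]
        have := (hk u h0).1
        rw [pow_succ] at this
        have h5 : (0 : ℝ) < (1 / 2) ^ (kx u) := by positivity
        nlinarith
      · simp only [h0, false_and, if_false, if_true]
        positivity
    · simp [h]
  refine (Finset.sum_le_sum h1).trans ?_
  rw [Finset.sum_comm]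
  calc _ ≤ ∑ u, 4 * x u ^ 2 := by
        refine Finset.sum_le_sum fun u _ => ?_
        rw [Finset.sum_ite_eq]
        split_ifs
        · exact le_rfl
        · positivity
    _ = 4 * ∑ u, x u ^ 2 := by rw [Finset.mul_sum]
    _ ≤ 4 := by linarith

lemma sum4 {ι κ' : Type*} [Fintype ι] [Fintype κ'] (s : Finset ℕ)
    (F : ι → κ' → ℕ → ℕ → ℝ) :
    ∑ u, ∑ v, ∑ k ∈ s, ∑ l ∈ s, F u v k l = ∑ k ∈ s, ∑ l ∈ s, ∑ u, ∑ v, F u v k l := by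
  calc _ = ∑ u, ∑ k ∈ s, ∑ v, ∑ l ∈ s, F u v k l :=
        Finset.sum_congr rfl fun u _ => Finset.sum_comm
    _ = ∑ k ∈ s, ∑ u, ∑ v, ∑ l ∈ s, F u v k l := Finset.sum_comm
    _ = ∑ k ∈ s, ∑ u, ∑ l ∈ s, ∑ v, F u v k l :=
        Finset.sum_congr rfl fun k _ => Finset.sum_congr rfl fun u _ => Finset.sum_comm
    _ = _ := Finset.sum_congr rfl fun k _ => Finset.sum_comm

lemma ecnt_ind {n m : ℕ} (S : Finset (Fin n)) (T : Finset (Fin m)) (X : Fin n → Fin m → Bool)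
    (c : ℝ) :
    ∑ u, ∑ v, (if u ∈ S ∧ v ∈ T then ind X u v * c else 0) = ecnt S T X * c := by
  unfold ecnt
  rw [Finset.sum_mul, ← Finset.sum_filter_add_sum_filter_not Finset.univ (fun u => u ∈ S)]
  rw [Finset.filter_mem_eq_inter, Finset.univ_inter]
  have h0 : ∑ u ∈ Finset.univ.filter (fun u => ¬ u ∈ S),
      ∑ v, (if u ∈ S ∧ v ∈ T then ind X u v * c else 0) = 0 := by
    refine Finset.sum_eq_zero fun u hu => Finset.sum_eq_zero fun v _ => ?_
    rw [if_neg]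
    simp only [Finset.mem_filter] at hu
    tauto
  rw [h0, add_zero]
  refine Finset.sum_congr rfl fun u hu => ?_
  simp only [hu, true_and]
  rw [← Finset.sum_filter, Finset.filter_mem_eq_inter, Finset.univ_inter, Finset.sum_mul]

lemma phi_swap {n m s : ℝ} (hn : 0 < n) (hnm : n ≤ m) (hs : 0 < s) (hsn : s ≤ n) :
    phi m s ≤ m / n * phi n s := by
  unfold phi
  have hm : 0 < m := hn.trans_le hnm
  have h1 : Real.log (m / s) = Real.log (m / n) + Real.log (n / s) := by
    rw [← Real.log_mul (by positivity) (by positivity)]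
    congr 1; field_simp
  have h2 : Real.log (m / n) ≤ m / n - 1 := Real.log_le_sub_one_of_pos (by positivity)
  have h3 : 0 ≤ Real.log (n / s) := Real.log_nonneg (by rw [le_div_iff₀ hs]; linarith)
  have h4 : 1 ≤ m / n := by rw [le_div_iff₀ hn]; linarith
  have h5 : 1 + Real.log (m / s) ≤ m / n * (1 + Real.log (n / s)) := by
    rw [h1]
    nlinarith [mul_nonneg (sub_nonneg.2 h4) h3]
  calc _ ≤ s * (m / n * (1 + Real.log (n / s))) := by gcongr
    _ = _ := by ring

set_option maxHeartbeats 1000000 in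
lemma heavy_mid {n m d₁ d₂ : ℕ} (hn : 0 < n) (hm : 0 < m) (hd : 0 < d₁) (hd2 : 0 < d₂)
    (hnd : n * d₁ = m * d₂) (h21 : d₂ ≤ d₁) {X : Fin n → Fin m → Bool}
    {κ : ℝ} (hκ : 0 < κ) (hDisc : Disc d₂ κ X)
    (x : Fin n → ℝ) (y : Fin m → ℝ) (hx0 : ∀ u, 0 ≤ x u) (hy0 : ∀ v, 0 ≤ y v)
    (hx : ∑ u, x u ^ 2 ≤ 1) (hy : ∑ v, y v ^ 2 ≤ 1) :
    ∑ u, ∑ v, (if √d₁ / m < x u * y v ∧ x u < y v * √d₁ ∧ y v * √d₁ < x u * d₂ then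
      x u * y v * ind X u v else 0) ≤ 2 * ((288 + 128 * κ) * √d₁) := by
  have hn' : (0 : ℝ) < n := by exact_mod_cast hn
  have hm' : (0 : ℝ) < m := by exact_mod_cast hm
  have hd' : (0 : ℝ) < d₁ := by exact_mod_cast hd
  have hd2' : (0 : ℝ) < d₂ := by exact_mod_cast hd2
  have hnd' : (n : ℝ) * d₁ = m * d₂ := by exact_mod_cast hnd
  have h21' : (d₂ : ℝ) ≤ d₁ := by exact_mod_cast h21
  have hnm : (n : ℝ) ≤ m := by
    by_contra h
    push Not at h
    nlinarith
  set D := √(d₁ : ℝ) with hDdef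
  have hD : 0 < D := Real.sqrt_pos.2 hd'
  have hD2 : D ^ 2 = d₁ := Real.sq_sqrt hd'.le
  set a := D / m with ha_def
  have ha : 0 < a := by positivity
  set p : ℝ := (d₂ : ℝ) / n with hp_def
  have hp : 0 < p := by positivity
  have hp2 : p = d₁ / m := by
    rw [hp_def, div_eq_div_iff hn'.ne' hm'.ne']; linarith
  have hpa : p = D * a := by
    rw [hp2, ha_def, ← hD2]; ring
  obtain ⟨kx, hkx⟩ := exists_lev x hx0 hx
  obtain ⟨ky, hky⟩ := exists_lev y hy0 hy
  set L := Finset.univ.sup kx + Finset.univ.sup ky + 1 with hL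
  have hkxL : ∀ u, kx u < L := fun u => by
    have := Finset.le_sup (f := kx) (Finset.mem_univ u)
    omega
  have hkyL : ∀ v, ky v < L := fun v => by
    have := Finset.le_sup (f := ky) (Finset.mem_univ v)
    omega
  set z : ℕ → ℝ := fun k => (1 / 2 : ℝ) ^ k with hz
  have hz0 : ∀ k, 0 < z k := fun k => by simp only [hz]; positivity
  set P : ℕ → ℕ → Prop := fun k l => a ≤ z k * z l ∧ z k ≤ 2 * z l * D ∧ z l * D ≤ 2 * z k * d₂
    with hP
  set S := lev x kx with hS
  set T := lev y ky with hT
  have hαs := lev_sum x kx hkx hx L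
  have hβs := lev_sum y ky hky hy L
  rw [← hS] at hαs
  rw [← hT] at hβs
  have step1 : ∑ u, ∑ v, (if a < x u * y v ∧ x u < y v * D ∧ y v * D < x u * d₂ then
      x u * y v * ind X u v else 0) ≤
      ∑ k ∈ Finset.range L, ∑ l ∈ Finset.range L,
        (if P k l then ecnt (S k) (T l) X * (z k * z l) else 0) := by
    have e1 : ∀ k l, (if P k l then ecnt (S k) (T l) X * (z k * z l) else 0) =
        ∑ u, ∑ v, (if P k l then (if u ∈ S k ∧ v ∈ T l then ind X u v * (z k * z l) else 0)
          else 0) := by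
      intro k l
      by_cases h : P k l
      · simp only [h, if_true]; rw [ecnt_ind]
      · simp [h]
    simp only [e1]
    rw [← sum4]
    refine Finset.sum_le_sum fun u _ => Finset.sum_le_sum fun v _ => ?_
    have hnn : ∀ k l, 0 ≤ (if P k l then (if u ∈ S k ∧ v ∈ T l then ind X u v * (z k * z l) else 0)
          else (0 : ℝ)) := by
      intro k l
      have := hz0 k
      have := hz0 l
      have := ind_nonneg X u v
      split_ifs <;> positivity
    split_ifs with h
    · obtain ⟨h1, h2, h3⟩ := h
      have hxu : 0 < x u := by
        refine lt_of_le_of_ne (hx0 u) fun h => ?_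
        rw [← h, zero_mul] at h1
        linarith
      have hyv : 0 < y v := by
        refine lt_of_le_of_ne (hy0 v) fun h => ?_
        rw [← h, mul_zero] at h1
        linarith
      obtain ⟨a1, a2⟩ := hkx u hxu
      obtain ⟨b1, b2⟩ := hky v hyv
      rw [pow_succ] at a1 b1
      have a1' : z (kx u) * (1 / 2) < x u := a1
      have b1' : z (ky v) * (1 / 2) < y v := b1
      have a2' : x u ≤ z (kx u) := a2
      have b2' : y v ≤ z (ky v) := b2
      have hxz : x u * y v ≤ z (kx u) * z (ky v) :=
        mul_le_mul a2' b2' hyv.le (hz0 _).le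
      have hPP : P (kx u) (ky v) := by
        refine ⟨h1.le.trans hxz, ?_, ?_⟩
        · have : y v * D ≤ z (ky v) * D := by gcongr
          linarith
        · have : x u * d₂ ≤ z (kx u) * d₂ := by gcongr
          have : z (ky v) * (1 / 2) * D ≤ y v * D := by gcongr
          linarith
      have hu : u ∈ S (kx u) := by simp [hS, lev, hxu]
      have hv : v ∈ T (ky v) := by simp [hT, lev, hyv]
      calc x u * y v * ind X u v ≤ z (kx u) * z (ky v) * ind X u v :=
            mul_le_mul_of_nonneg_right hxz (ind_nonneg X u v)
        _ = (if P (kx u) (ky v) then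
              (if u ∈ S (kx u) ∧ v ∈ T (ky v) then ind X u v * (z (kx u) * z (ky v)) else 0)
              else (0 : ℝ)) := by
            rw [if_pos hPP, if_pos ⟨hu, hv⟩]; ring
        _ ≤ ∑ l ∈ Finset.range L, (if P (kx u) l then
              (if u ∈ S (kx u) ∧ v ∈ T l then ind X u v * (z (kx u) * z l) else 0)
              else (0 : ℝ)) :=
            Finset.single_le_sum (f := fun l => (if P (kx u) l then
              (if u ∈ S (kx u) ∧ v ∈ T l then ind X u v * (z (kx u) * z l) else 0)
              else (0 : ℝ))) (fun l _ => hnn _ l) (Finset.mem_range.2 (hkyL v))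
        _ ≤ _ := Finset.single_le_sum (f := fun k => ∑ l ∈ Finset.range L, (if P k l then
              (if u ∈ S k ∧ v ∈ T l then ind X u v * (z k * z l) else 0)
              else (0 : ℝ))) (fun k _ => Finset.sum_nonneg fun l _ => hnn k l)
              (Finset.mem_range.2 (hkxL u))
    · exact Finset.sum_nonneg fun k _ => Finset.sum_nonneg fun l _ => hnn k l
  refine step1.trans ?_
  set α : ℕ → ℝ := fun k => ((S k).card : ℝ) * z k ^ 2 with hα
  set β : ℕ → ℝ := fun k => ((T k).card : ℝ) * z k ^ 2 with hβ
  have hα0 : ∀ k, 0 ≤ α k := fun k => by simp only [hα]; positivity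
  have hβ0 : ∀ k, 0 ≤ β k := fun k => by simp only [hβ]; positivity
  have hα4 : ∑ k ∈ Finset.range L, α k ≤ 4 := hαs
  have hβ4 : ∑ k ∈ Finset.range L, β k ≤ 4 := hβs
  have hα1 : ∀ k ∈ Finset.range L, α k ≤ 4 := fun k hk =>
    (Finset.single_le_sum (f := α) (fun i _ => hα0 i) hk).trans hα4
  have hβ1 : ∀ k ∈ Finset.range L, β k ≤ 4 := fun k hk =>
    (Finset.single_le_sum (f := β) (fun i _ => hβ0 i) hk).trans hβ4
  have hM : (0 : ℝ) < (m : ℝ) / n := by positivity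
  have step2 : ∀ k ∈ Finset.range L, ∀ l ∈ Finset.range L,
      (if P k l then ecnt (S k) (T l) X * (z k * z l) else 0) ≤
      (if P k l then pb D κ p m 1 (z k) (α k) (z l) (β l) else 0) +
      (if P k l then pb D κ p n (m / n) (z l) (β l) (z k) (α k) else 0) := by
    intro k hk l hl
    by_cases h : P k l
    swap
    · simp [h]
    simp only [h, if_true]
    have zk := hz0 k
    have zl := hz0 l
    have nn1 : 0 ≤ pb D κ p m 1 (z k) (α k) (z l) (β l) :=
      pb_nonneg hD.le hκ.le hp.le zero_le_one zk.le (hα0 k) zl.le (hβ0 l)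
    have nn2 : 0 ≤ pb D κ p n (m / n) (z l) (β l) (z k) (α k) :=
      pb_nonneg hD.le hκ.le hp.le hM.le zl.le (hβ0 l) zk.le (hα0 k)
    have he : 0 ≤ ecnt (S k) (T l) X :=
      Finset.sum_nonneg fun u _ => Finset.sum_nonneg fun v _ => ind_nonneg X u v
    by_cases hs0 : (S k).card = 0
    · have : ecnt (S k) (T l) X = 0 := by
        rw [Finset.card_eq_zero] at hs0
        simp [ecnt, hs0]
      rw [this]; linarith
    by_cases ht0 : (T l).card = 0
    · have : ecnt (S k) (T l) X = 0 := by
        rw [Finset.card_eq_zero] at ht0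
        simp [ecnt, ht0]
      rw [this]; linarith
    have hs : (0 : ℝ) < (S k).card := by exact_mod_cast Nat.pos_of_ne_zero hs0
    have ht : (0 : ℝ) < (T l).card := by exact_mod_cast Nat.pos_of_ne_zero ht0
    have hsn : ((S k).card : ℝ) ≤ n := by
      have := Finset.card_le_univ (S k)
      rw [Fintype.card_fin] at this
      exact_mod_cast this
    have htm : ((T l).card : ℝ) ≤ m := by
      have := Finset.card_le_univ (T l)
      rw [Fintype.card_fin] at this
      exact_mod_cast this
    have hDi := hDisc (S k) (T l) hs0 ht0
    rcases le_total ((S k).card : ℝ) ((T l).card : ℝ) with hst | hst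
    · rw [max_eq_right hst] at hDi
      have := pair_bound (N := m) (c := 1) (a := a) hD hκ hp one_pos zk zl hs ht htm he hpa h.1
        (hβ1 l hl) (by rw [mul_one]; exact hDi)
      linarith
    · rw [max_eq_left hst] at hDi
      have := pair_bound (N := n) (c := m / n) (a := a) hD hκ hp hM zl zk ht hs hsn he hpa
        (by rw [mul_comm]; exact h.1)
        (hα1 k hk) (by
          intro hh
          have e2 : p * ((T l).card : ℝ) * ((S k).card : ℝ) =
            p * ((S k).card : ℝ) * ((T l).card : ℝ) := by ring
          rw [e2] at hh ⊢
          refine (hDi hh).trans ?_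
          rw [mul_assoc]
          exact mul_le_mul_of_nonneg_left (phi_swap hn' hnm hs hsn) hκ.le)
      rw [mul_comm (z l) (z k)] at this
      linarith
  refine (Finset.sum_le_sum fun k hk => Finset.sum_le_sum fun l hl => step2 k hk l hl).trans ?_
  simp only [Finset.sum_add_distrib]
  have f1 := sum_pb L hD hκ hp hm' one_pos ha hpa (by rw [hp2, hD2]; field_simp) α β hα0 hβ0
    hα4 hβ4 P (fun k l h => ⟨h.1, by rw [one_mul]; exact h.2.1⟩)
  have f2 := sum_pb L hD hκ hp hn' hM ha hpa (by rw [hp2, hD2]; field_simp) β α hβ0 hα0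
    hβ4 hα4 (fun l k => P k l) (fun l k h => ⟨by rw [mul_comm]; exact h.1, by
      have h3 := h.2.2
      have : (m : ℝ) * d₂ = n * D ^ 2 := by rw [hD2]; linarith
      have h4 : (m : ℝ) * z l * D ≤ 2 * z k * n * D * D := by
        calc (m : ℝ) * z l * D = m * (z l * D) := by ring
          _ ≤ m * (2 * z k * d₂) := by gcongr
          _ = 2 * z k * (m * d₂) := by ring
          _ = _ := by rw [this]; ring
      have h5 := le_of_mul_le_mul_right h4 hD
      rw [div_mul_eq_mul_div, div_le_iff₀ hn']
      calc _ ≤ _ := h5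
        _ = _ := by simp only [hz]; ring⟩)
  rw [Finset.sum_comm] at f2
  rw [two_mul]
  refine add_le_add ?_ ?_
  · refine le_trans (le_of_eq ?_) f1
    refine Finset.sum_congr rfl fun k _ => Finset.sum_congr rfl fun l _ => ?_
    by_cases h : P k l
    · rw [if_pos h, if_pos h]
    · rw [if_neg h, if_neg h]
  · refine le_trans (le_of_eq ?_) f2
    refine Finset.sum_congr rfl fun k _ => Finset.sum_congr rfl fun l _ => ?_
    by_cases h : P k l
    · rw [if_pos h, if_pos h]
    · rw [if_neg h, if_neg h]

lemma heavy_bound {n m d₁ d₂ : ℕ} (hn : 0 < n) (hm : 0 < m) (hd : 0 < d₁) (hd2 : 0 < d₂)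
    (hnd : n * d₁ = m * d₂) (h21 : d₂ ≤ d₁) {X : Fin n → Fin m → Bool}
    (hX : X ∈ BBG n m d₁ d₂)
    {κ : ℝ} (hκ : 0 < κ) (hDisc : Disc d₂ κ X)
    (x : Fin n → ℝ) (y : Fin m → ℝ) (hx0 : ∀ u, 0 ≤ x u) (hy0 : ∀ v, 0 ≤ y v)
    (hx : ∑ u, x u ^ 2 ≤ 1) (hy : ∑ v, y v ^ 2 ≤ 1) :
    ∑ u, ∑ v, (if √d₁ / m < x u * y v then x u * y v * ind X u v else 0) ≤
      (2 + 2 * (288 + 128 * κ)) * √d₁ := by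
  have hd' : (0 : ℝ) < d₁ := by exact_mod_cast hd
  have hd2' : (0 : ℝ) < d₂ := by exact_mod_cast hd2
  have hmid := heavy_mid hn hm hd hd2 hnd h21 hκ hDisc x y hx0 hy0 hx hy
  obtain ⟨hr, hc⟩ := mem_BBG.1 hX
  set D := √(d₁ : ℝ) with hDdef
  have hD : 0 < D := Real.sqrt_pos.2 hd'
  have hD2 : D ^ 2 = d₁ := Real.sq_sqrt hd'.le
  have pt : ∀ u v, (if D / m < x u * y v then x u * y v * ind X u v else 0) ≤
      x u ^ 2 / D * ind X u v + y v ^ 2 * D / d₂ * ind X u v +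
      (if D / m < x u * y v ∧ x u < y v * D ∧ y v * D < x u * d₂ then
      x u * y v * ind X u v else 0) := by
    intro u v
    have hi := ind_nonneg X u v
    have hxu := hx0 u
    have hyv := hy0 v
    have n1 : 0 ≤ x u ^ 2 / D * ind X u v := by positivity
    have n2 : 0 ≤ y v ^ 2 * D / d₂ * ind X u v := by positivity
    have n3 : 0 ≤ (if D / m < x u * y v ∧ x u < y v * D ∧ y v * D < x u * d₂ then
      x u * y v * ind X u v else 0) := by split_ifs <;> positivity
    by_cases h1 : D / m < x u * y v
    swap
    · rw [if_neg h1]; linarith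
    rw [if_pos h1]
    by_cases h2 : x u < y v * D
    swap
    · push Not at h2
      have : x u * y v ≤ x u ^ 2 / D := by
        rw [le_div_iff₀ hD]
        nlinarith
      have := mul_le_mul_of_nonneg_right this hi
      linarith
    by_cases h3 : y v * D < x u * d₂
    swap
    · push Not at h3
      have : x u * y v ≤ y v ^ 2 * D / d₂ := by
        rw [le_div_iff₀ hd2']
        nlinarith
      have := mul_le_mul_of_nonneg_right this hi
      linarith
    rw [if_pos ⟨h1, h2, h3⟩]
    linarith
  refine (Finset.sum_le_sum fun u _ => Finset.sum_le_sum fun v _ => pt u v).trans ?_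
  simp only [Finset.sum_add_distrib]
  have s1 : ∑ u, ∑ v, x u ^ 2 / D * ind X u v ≤ D := by
    simp only [← Finset.mul_sum, hr]
    rw [← Finset.sum_mul, ← Finset.sum_div, ← hD2]
    calc _ ≤ 1 / D * D ^ 2 := by gcongr
      _ = D := by field_simp
  have s2 : ∑ u, ∑ v, y v ^ 2 * D / d₂ * ind X u v ≤ D := by
    rw [Finset.sum_comm]
    simp only [← Finset.mul_sum, hc]
    rw [← Finset.sum_mul, ← Finset.sum_div, ← Finset.sum_mul]
    calc _ ≤ 1 * D / d₂ * d₂ := by gcongr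
      _ = D := by field_simp
  linarith


lemma exists_net (E : Type*) [NormedAddCommGroup E] [NormedSpace ℝ E] [FiniteDimensional ℝ E] :
    ∃ N : Finset E, N.card ≤ 5 ^ (Module.finrank ℝ E) ∧ (∀ c ∈ N, ‖c‖ ≤ 1) ∧
      ∀ x : E, ‖x‖ ≤ 1 → ∃ c ∈ N, ‖x - c‖ ≤ 1 / 2 := by
  set Q : Finset E → Prop := fun s => (∀ c ∈ s, ‖c‖ ≤ 2) ∧
    ∀ c ∈ s, ∀ d ∈ s, c ≠ d → 1 ≤ ‖c - d‖ with hQ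
  have hb : ∀ s, Q s → s.card ≤ 5 ^ (Module.finrank ℝ E) := fun s hs =>
    Besicovitch.card_le_of_separated s hs.1 hs.2
  have : ∃ s, Q s ∧ ∀ t, Q t → t.card ≤ s.card := by
    set k := sSup {k : ℕ | ∃ s, Q s ∧ s.card = k}
    have hne : {k : ℕ | ∃ s, Q s ∧ s.card = k}.Nonempty := ⟨0, ∅, ⟨by simp, by simp⟩, by simp⟩
    have hbd : BddAbove {k : ℕ | ∃ s, Q s ∧ s.card = k} :=
      ⟨_, by rintro k ⟨s, hs, rfl⟩; exact hb s hs⟩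
    obtain ⟨s, hs, hk⟩ := Nat.sSup_mem hne hbd
    refine ⟨s, hs, fun t ht => ?_⟩
    rw [hk]
    exact le_csSup hbd ⟨t, ht, rfl⟩
  obtain ⟨s, hs, hmax⟩ := this
  refine ⟨s.image fun c => (1 / 2 : ℝ) • c, Finset.card_image_le.trans (hb s hs), ?_, ?_⟩
  · intro c hc
    obtain ⟨d, hd, rfl⟩ := Finset.mem_image.1 hc
    have := hs.1 d hd
    rw [norm_smul]
    norm_num
    linarith
  · intro x hx
    by_contra hcon
    push Not at hcon
    have far : ∀ c ∈ s, 1 < ‖(2 : ℝ) • x - c‖ := by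
      intro c hc
      have h1 := hcon _ (Finset.mem_image_of_mem _ hc)
      have h2 : (2 : ℝ) • x - c = (2 : ℝ) • (x - (1 / 2 : ℝ) • c) := by
        rw [smul_sub, smul_smul]; norm_num
      rw [h2, norm_smul]
      norm_num
      simp only [one_div] at h1
      linarith
    have hnot : (2 : ℝ) • x ∉ s := by
      intro h
      have := far _ h
      rw [sub_self, norm_zero] at this
      linarith
    have hQ' : Q (insert ((2 : ℝ) • x) s) := by
      constructor
      · intro c hc
        rcases Finset.mem_insert.1 hc with rfl | hc
        · rw [norm_smul]; norm_num; linarith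
        · exact hs.1 c hc
      · intro c hc d hd hne
        rcases Finset.mem_insert.1 hc with h1 | hc
        · rcases Finset.mem_insert.1 hd with h2 | hd
          · exact absurd (h1.trans h2.symm) hne
          · rw [h1]; exact (far d hd).le
        · rcases Finset.mem_insert.1 hd with h2 | hd
          · rw [h2, norm_sub_rev]; exact (far c hc).le
          · exact hs.2 c hc d hd hne
    have := hmax _ hQ'
    rw [Finset.card_insert_of_notMem hnot] at this
    omega

/-- a bilinear form bounded by `τ` on a pair of nets is bounded by `4 τ`. -/
lemma net_bilin {E F : Type*} [NormedAddCommGroup E] [NormedSpace ℝ E] [FiniteDimensional ℝ E]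
    [NormedAddCommGroup F] [NormedSpace ℝ F] [FiniteDimensional ℝ F]
    (B : E →L[ℝ] F →L[ℝ] ℝ) (N : Finset E) (M : Finset F) (τ : ℝ) (hτ : 0 ≤ τ)
    (hN : ∀ x : E, ‖x‖ ≤ 1 → ∃ c ∈ N, ‖x - c‖ ≤ 1 / 2)
    (hM : ∀ x : F, ‖x‖ ≤ 1 → ∃ c ∈ M, ‖x - c‖ ≤ 1 / 2)
    (h : ∀ c ∈ N, ∀ d ∈ M, B c d ≤ τ) (x : E) (y : F) : B x y ≤ 4 * τ * ‖x‖ * ‖y‖ := by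
  have h1 : ∀ c ∈ N, ‖B c‖ ≤ 2 * τ := by
    intro c hc
    have key : ∀ y : F, ‖y‖ ≤ 1 → B c y ≤ τ + ‖B c‖ * (1 / 2) := by
      intro y hy
      obtain ⟨d, hd, hyd⟩ := hM y hy
      have e1 : B c y = B c d + B c (y - d) := by rw [map_sub]; ring
      have e2 : B c (y - d) ≤ ‖B c‖ * (1 / 2) :=
        (le_abs_self _).trans (((B c).le_opNorm _).trans
          (mul_le_mul_of_nonneg_left hyd (norm_nonneg _)))
      have := h c hc d hd
      linarith
    have : ‖B c‖ ≤ τ + ‖B c‖ * (1 / 2) := by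
      refine ContinuousLinearMap.opNorm_le_of_unit_norm (𝕜 := ℝ) (by positivity) fun y hy => ?_
      rw [Real.norm_eq_abs, abs_le]
      have a1 := key y hy.le
      have a2 := key (-y) (by rw [norm_neg]; exact hy.le)
      rw [map_neg] at a2
      constructor <;> linarith
    linarith
  have h2 : ‖B‖ ≤ 4 * τ := by
    have : ‖B‖ ≤ 2 * τ + ‖B‖ * (1 / 2) := by
      refine ContinuousLinearMap.opNorm_le_of_unit_norm (𝕜 := ℝ) (by positivity) fun x hx => ?_
      obtain ⟨c, hc, hxc⟩ := hN x hx.le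
      have e1 : B x = B c + B (x - c) := by rw [map_sub]; abel
      have e2 : ‖B (x - c)‖ ≤ ‖B‖ * (1 / 2) :=
        (B.le_opNorm _).trans (mul_le_mul_of_nonneg_left hxc (norm_nonneg _))
      rw [e1]
      exact (norm_add_le _ _).trans (add_le_add (h1 c hc) e2)
    linarith
  calc B x y ≤ ‖B x y‖ := le_abs_self _
    _ ≤ ‖B‖ * ‖x‖ * ‖y‖ := B.le_opNorm₂ x y
    _ ≤ _ := by gcongr


lemma center_bound {n m d₁ d₂ : ℕ} (hn : 0 < n) (hm : 0 < m)
    (hd : 0 < d₁) (hd2 : 0 < d₂) {X : Fin n → Fin m → Bool} (hX : X ∈ BBG n m d₁ d₂) {B : ℝ}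
    (hB : 0 ≤ B)
    (H : ∀ (x : Fin n → ℝ) (y : Fin m → ℝ), ∑ u, x u = 0 → ∑ v, y v = 0 →
      2 * ∑ u, ∑ v, x u * y v * ind X u v ≤ B * (∑ u, x u ^ 2 + ∑ v, y v ^ 2))
    (x : Fin n → ℝ) (y : Fin m → ℝ) (hxy : √d₁ * ∑ u, x u + √d₂ * ∑ v, y v = 0) :
    2 * ∑ u, ∑ v, x u * y v * ind X u v ≤ B * (∑ u, x u ^ 2 + ∑ v, y v ^ 2) := by
  have hn' : (0 : ℝ) < n := by exact_mod_cast hn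
  have hm' : (0 : ℝ) < m := by exact_mod_cast hm
  have hd' : (0 : ℝ) < √d₁ := Real.sqrt_pos.2 (by exact_mod_cast hd)
  have hd2' : (0 : ℝ) < √d₂ := Real.sqrt_pos.2 (by exact_mod_cast hd2)
  obtain ⟨hr, hc⟩ := mem_BBG.1 hX
  set s := (∑ u, x u) / n with hs
  set t := (∑ v, y v) / m with ht
  have hs' : ∑ u, x u = n * s := by rw [hs]; field_simp
  have ht' : ∑ v, y v = m * t := by rw [ht]; field_simp
  have hx0 : ∑ u, (x u - s) = 0 := by
    rw [Finset.sum_sub_distrib, hs']; simp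
  have hy0 : ∑ v, (y v - t) = 0 := by
    rw [Finset.sum_sub_distrib, ht']; simp
  have hst : s * t ≤ 0 := by
    rw [hs', ht'] at hxy
    have e : √d₁ * n * s = - (√d₂ * m * t) := by linarith
    have : (√d₁ * n) * (s * t) ≤ 0 := by
      calc _ = (√d₁ * n * s) * t := by ring
        _ = - ((√d₂ * m) * t ^ 2) := by rw [e]; ring
        _ ≤ 0 := by
          have : 0 ≤ (√d₂ * m) * t ^ 2 := by positivity
          linarith
    by_contra hcon
    push Not at hcon
    have : 0 < (√d₁ * n) * (s * t) := by positivity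
    linarith
  have h1 := H _ _ hx0 hy0
  have e1 : ∑ u, (x u - s) ^ 2 ≤ ∑ u, x u ^ 2 := by
    have : ∑ u, (x u - s) ^ 2 = ∑ u, x u ^ 2 - n * s ^ 2 := by
      have : ∀ u, (x u - s) ^ 2 = x u ^ 2 - (2 * s) * x u + s ^ 2 := fun u => by ring
      simp only [this, Finset.sum_add_distrib, Finset.sum_sub_distrib, ← Finset.mul_sum, hs']
      simp
      ring
    rw [this]
    have : 0 ≤ (n : ℝ) * s ^ 2 := by positivity
    linarith
  have e2 : ∑ v, (y v - t) ^ 2 ≤ ∑ v, y v ^ 2 := by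
    have : ∑ v, (y v - t) ^ 2 = ∑ v, y v ^ 2 - m * t ^ 2 := by
      have : ∀ v, (y v - t) ^ 2 = y v ^ 2 - (2 * t) * y v + t ^ 2 := fun u => by ring
      simp only [this, Finset.sum_add_distrib, Finset.sum_sub_distrib, ← Finset.mul_sum, ht']
      simp
      ring
    rw [this]
    have : 0 ≤ (m : ℝ) * t ^ 2 := by positivity
    linarith
  have e3 : ∑ u, ∑ v, x u * y v * ind X u v =
      ∑ u, ∑ v, (x u - s) * (y v - t) * ind X u v + s * t * (n * d₁) := by
    have p1 : ∀ u v, x u * y v * ind X u v = (x u - s) * (y v - t) * ind X u v +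
        t * (x u - s) * ind X u v + s * (y v - t) * ind X u v + s * t * ind X u v :=
      fun u v => by ring
    simp only [p1, Finset.sum_add_distrib]
    have q1 : ∑ u, ∑ v, t * (x u - s) * ind X u v = 0 := by
      simp only [← Finset.mul_sum, hr]
      rw [← Finset.sum_mul, ← Finset.mul_sum, hx0]; simp
    have q2 : ∑ u, ∑ v, s * (y v - t) * ind X u v = 0 := by
      rw [Finset.sum_comm]
      simp only [← Finset.mul_sum, hc]
      rw [← Finset.sum_mul, ← Finset.mul_sum, hy0]; simp
    have q3 : ∑ u : Fin n, ∑ v, s * t * ind X u v = s * t * (n * d₁) := by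
      simp only [← Finset.mul_sum, hr]
      simp
    rw [q1, q2, q3]; ring
  have e4 : s * t * (n * d₁) ≤ 0 := mul_nonpos_of_nonpos_of_nonneg hst (by positivity)
  have e5 : B * (∑ u, (x u - s) ^ 2 + ∑ v, (y v - t) ^ 2) ≤
      B * (∑ u, x u ^ 2 + ∑ v, y v ^ 2) := by gcongr
  rw [e3]
  linarith

open Matrix in
lemma adj_quad {n m : ℕ} (X : Fin n → Fin m → Bool) (z : Fin n ⊕ Fin m → ℝ) :
    z ⬝ᵥ (adj X *ᵥ z) = 2 * ∑ u, ∑ v, z (Sum.inl u) * z (Sum.inr v) * ind X u v := by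
  have e1 : ∑ u, z (Sum.inl u) * (adj X *ᵥ z) (Sum.inl u) =
      ∑ u, ∑ v, z (Sum.inl u) * z (Sum.inr v) * ind X u v := by
    refine Finset.sum_congr rfl fun u _ => ?_
    simp only [mulVec, dotProduct, adj, Fintype.sum_sum_type, fromBlocks_apply₁₁,
      fromBlocks_apply₁₂, Matrix.zero_apply, zero_mul, Finset.sum_const_zero, zero_add]
    rw [Finset.mul_sum]
    refine Finset.sum_congr rfl fun v _ => ?_
    simp only [biadj, ind, Matrix.of_apply]
    ring
  have e2 : ∑ v, z (Sum.inr v) * (adj X *ᵥ z) (Sum.inr v) =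
      ∑ u, ∑ v, z (Sum.inl u) * z (Sum.inr v) * ind X u v := by
    rw [Finset.sum_comm]
    refine Finset.sum_congr rfl fun v _ => ?_
    simp only [mulVec, dotProduct, adj, Fintype.sum_sum_type, fromBlocks_apply₂₁,
      fromBlocks_apply₂₂, Matrix.zero_apply, zero_mul, Finset.sum_const_zero, add_zero]
    rw [Finset.mul_sum]
    refine Finset.sum_congr rfl fun u _ => ?_
    simp only [biadj, ind, Matrix.of_apply, Matrix.transpose_apply]
    ring
  rw [dotProduct, Fintype.sum_sum_type, e1, e2]
  ring

open Matrix in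
lemma spectral {n m d₁ d₂ : ℕ} (hn : 0 < n) (hm : 0 < m)
    (hd : 0 < d₁) (hd2 : 0 < d₂) {X : Fin n → Fin m → Bool} (hX : X ∈ BBG n m d₁ d₂) {B : ℝ}
    (hB : 0 ≤ B)
    (H : ∀ (x : Fin n → ℝ) (y : Fin m → ℝ), ∑ u, x u = 0 → ∑ v, y v = 0 →
      2 * ∑ u, ∑ v, x u * y v * ind X u v ≤ B * (∑ u, x u ^ 2 + ∑ v, y v ^ 2))
    (hA : (adj X).IsHermitian) (σ : Fin (n + m) ≃ (Fin n ⊕ Fin m))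
    (hanti : Antitone (fun i => hA.eigenvalues (σ i))) (i : Fin (n + m)) (hi : (i : ℕ) = 1) :
    hA.eigenvalues (σ i) ≤ B := by
  set i0 : Fin (n + m) := ⟨0, by omega⟩ with hi0
  have hne : σ i0 ≠ σ i := by
    intro h
    have := σ.injective h
    rw [← this] at hi
    simp [hi0] at hi
  have hle : hA.eigenvalues (σ i) ≤ hA.eigenvalues (σ i0) :=
    hanti (show i0 ≤ i by rw [Fin.le_def]; simp [hi0])
  set l0 := hA.eigenvalues (σ i0)
  set l1 := hA.eigenvalues (σ i)
  set f0 : Fin n ⊕ Fin m → ℝ := ⇑(hA.eigenvectorBasis (σ i0)) with hf0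
  set f1 : Fin n ⊕ Fin m → ℝ := ⇑(hA.eigenvectorBasis (σ i)) with hf1
  have A0 : adj X *ᵥ f0 = l0 • f0 := hA.mulVec_eigenvectorBasis (σ i0)
  have A1 : adj X *ᵥ f1 = l1 • f1 := hA.mulVec_eigenvectorBasis (σ i)
  have ip : ∀ a b, (⇑(hA.eigenvectorBasis a) : Fin n ⊕ Fin m → ℝ) ⬝ᵥ
      ⇑(hA.eigenvectorBasis b) = if b = a then (1 : ℝ) else 0 := by
    intro a b
    have h1 := orthonormal_iff_ite.1 hA.eigenvectorBasis.orthonormal b a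
    rw [← h1, EuclideanSpace.inner_eq_star_dotProduct]
    simp
  have d00 : f0 ⬝ᵥ f0 = 1 := by rw [hf0, ip]; simp
  have d11 : f1 ⬝ᵥ f1 = 1 := by rw [hf1, ip]; simp
  have d01 : f0 ⬝ᵥ f1 = 0 := by rw [hf0, hf1, ip, if_neg hne.symm]
  have d10 : f1 ⬝ᵥ f0 = 0 := by rw [hf0, hf1, ip, if_neg hne]
  set ℓ : (Fin n ⊕ Fin m → ℝ) → ℝ := fun z =>
    √d₁ * ∑ u, z (Sum.inl u) + √d₂ * ∑ v, z (Sum.inr v) with hℓ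
  have hlin : ∀ (a b : ℝ), ℓ (a • f0 + b • f1) = a * ℓ f0 + b * ℓ f1 := by
    intro a b
    simp only [hℓ, Pi.add_apply, Pi.smul_apply, smul_eq_mul, Finset.sum_add_distrib,
      ← Finset.mul_sum]
    ring
  obtain ⟨a, b, hab, hpos⟩ : ∃ a b : ℝ, a * ℓ f0 + b * ℓ f1 = 0 ∧ 0 < a ^ 2 + b ^ 2 := by
    by_cases h : ℓ f0 = 0
    · exact ⟨1, 0, by rw [h]; ring, by norm_num⟩
    · exact ⟨- ℓ f1, ℓ f0, by ring, by positivity⟩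
  set z := a • f0 + b • f1 with hz
  have hz0 : ℓ z = 0 := by rw [hz, hlin]; exact hab
  have key := center_bound hn hm hd hd2 hX hB H (fun u => z (Sum.inl u))
    (fun v => z (Sum.inr v)) hz0
  rw [← adj_quad] at key
  have hnorm : ∑ u, z (Sum.inl u) ^ 2 + ∑ v, z (Sum.inr v) ^ 2 = a ^ 2 + b ^ 2 := by
    have h1 : z ⬝ᵥ z = a ^ 2 + b ^ 2 := by
      rw [hz]
      simp only [add_dotProduct, dotProduct_add, smul_dotProduct, dotProduct_smul, d00, d11,
        d01, d10, smul_eq_mul]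
      ring
    rw [← h1, dotProduct, Fintype.sum_sum_type]
    simp only [sq]
  have hquad : z ⬝ᵥ (adj X *ᵥ z) = a ^ 2 * l0 + b ^ 2 * l1 := by
    rw [hz, mulVec_add, mulVec_smul, mulVec_smul, A0, A1]
    simp only [add_dotProduct, dotProduct_add, smul_dotProduct, dotProduct_smul, d00, d11,
      d01, d10, smul_eq_mul]
    ring
  rw [hquad, hnorm] at key
  have : l1 * (a ^ 2 + b ^ 2) ≤ B * (a ^ 2 + b ^ 2) := by
    have := mul_le_mul_of_nonneg_left hle (sq_nonneg a)
    linarith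
  exact le_of_mul_le_mul_right this hpos


lemma net_main (n m : ℕ) : ∃ (N : Finset (Fin n → ℝ)) (M : Finset (Fin m → ℝ)),
    N.card ≤ 5 ^ n ∧ M.card ≤ 5 ^ m ∧ (∀ c ∈ N, ∑ u, c u = 0 ∧ ∑ u, c u ^ 2 ≤ 1) ∧
    (∀ d ∈ M, ∑ v, d v ^ 2 ≤ 1) ∧
    ∀ (W : Fin n → Fin m → ℝ) (τ : ℝ), 0 ≤ τ →
      (∀ c ∈ N, ∀ d ∈ M, ∑ u, ∑ v, c u * d v * W u v ≤ τ) →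
      ∀ (x : Fin n → ℝ) (y : Fin m → ℝ), ∑ u, x u = 0 →
        2 * ∑ u, ∑ v, x u * y v * W u v ≤ 4 * τ * (∑ u, x u ^ 2 + ∑ v, y v ^ 2) := by
  let E : Submodule ℝ (EuclideanSpace ℝ (Fin n)) :=
    { carrier := {x | ∑ u, x u = 0}
      add_mem' := by
        intro a b ha hb
        simp only [Set.mem_ofPred_eq, PiLp.add_apply, Finset.sum_add_distrib] at *
        rw [ha, hb, add_zero]
      zero_mem' := by simp
      smul_mem' := by
        intro c a ha
        simp only [Set.mem_ofPred_eq, PiLp.smul_apply, smul_eq_mul, ← Finset.mul_sum] at *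
        rw [ha, mul_zero] }
  have hE : Module.finrank ℝ E ≤ n := by
    have := Submodule.finrank_le E
    rwa [finrank_euclideanSpace_fin] at this
  obtain ⟨N, hNc, hN1, hN⟩ := exists_net E
  obtain ⟨M, hMc, hM1, hM⟩ := exists_net (EuclideanSpace ℝ (Fin m))
  rw [finrank_euclideanSpace_fin] at hMc
  refine ⟨N.image fun (c : E) u => (c : EuclideanSpace ℝ (Fin n)) u, M.image fun d v => d v, ?_, ?_,
    ?_, ?_, ?_⟩
  · exact Finset.card_image_le.trans (hNc.trans (Nat.pow_le_pow_right (by norm_num) hE))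
  · exact Finset.card_image_le.trans hMc
  · intro c hc
    obtain ⟨e, he, rfl⟩ := Finset.mem_image.1 hc
    refine ⟨e.2, ?_⟩
    have h1 := hN1 e he
    rw [Submodule.coe_norm] at h1
    rw [← EuclideanSpace.real_norm_sq_eq]
    exact pow_le_one₀ (norm_nonneg _) h1
  · intro d hd
    obtain ⟨e, he, rfl⟩ := Finset.mem_image.1 hd
    rw [← EuclideanSpace.real_norm_sq_eq]
    exact pow_le_one₀ (norm_nonneg _) (hM1 e he)
  · intro W τ hτ h x y hx
    let f : E →ₗ[ℝ] EuclideanSpace ℝ (Fin m) →ₗ[ℝ] ℝ :=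
      LinearMap.mk₂ ℝ (fun a b => ∑ u, ∑ v, (a : EuclideanSpace ℝ (Fin n)) u * b v * W u v)
        (by
          intro a a' b
          simp only [Submodule.coe_add, PiLp.add_apply, add_mul, Finset.sum_add_distrib])
        (by
          intro c a b
          simp only [Submodule.coe_smul, PiLp.smul_apply, smul_eq_mul, Finset.mul_sum, mul_assoc])
        (by
          intro a b b'
          simp only [PiLp.add_apply, add_mul, mul_add, Finset.sum_add_distrib])
        (by
          intro c a b
          simp only [PiLp.smul_apply, smul_eq_mul, Finset.mul_sum]
          refine Finset.sum_congr rfl fun u _ => Finset.sum_congr rfl fun v _ => ?_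
          ring)
    let B : E →L[ℝ] EuclideanSpace ℝ (Fin m) →L[ℝ] ℝ :=
      LinearMap.toContinuousLinearMap
        ((LinearMap.toContinuousLinearMap :
          (EuclideanSpace ℝ (Fin m) →ₗ[ℝ] ℝ) ≃ₗ[ℝ] _).toLinearMap ∘ₗ f)
    have hBf : ∀ a b, B a b = ∑ u, ∑ v, (a : EuclideanSpace ℝ (Fin n)) u * b v * W u v :=
      fun a b => rfl
    have key := net_bilin B N M τ hτ hN hM (by
      intro c hc d hd
      rw [hBf]
      exact h _ (Finset.mem_image_of_mem _ hc) _ (Finset.mem_image_of_mem _ hd))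
      ⟨WithLp.toLp 2 x, hx⟩ (WithLp.toLp 2 y)
    rw [hBf] at key
    rw [← Real.sqrt_sq (norm_nonneg (⟨WithLp.toLp 2 x, hx⟩ : E)), Submodule.coe_norm,
      ← Real.sqrt_sq (norm_nonneg (WithLp.toLp 2 y)), EuclideanSpace.real_norm_sq_eq,
      EuclideanSpace.real_norm_sq_eq] at key
    simp only at key
    set a := √(∑ u, x u ^ 2) with ha
    set b := √(∑ v, y v ^ 2) with hb
    have ha2 : a ^ 2 = ∑ u, x u ^ 2 := Real.sq_sqrt (Finset.sum_nonneg fun _ _ => sq_nonneg _)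
    have hb2 : b ^ 2 = ∑ v, y v ^ 2 := Real.sq_sqrt (Finset.sum_nonneg fun _ _ => sq_nonneg _)
    rw [← ha2, ← hb2]
    have h3 : 2 * (4 * τ * a * b) ≤ 4 * τ * (a ^ 2 + b ^ 2) := by
      nlinarith [mul_nonneg hτ (sq_nonneg (a - b))]
    linarith

lemma triv_bound {n m d₁ : ℕ} (hd : 0 < d₁) {X : Fin n → Fin m → Bool}
    (hX : X ∈ BBG n m d₁ 1) (x : Fin n → ℝ) (y : Fin m → ℝ) :
    2 * ∑ u, ∑ v, x u * y v * ind X u v ≤ √d₁ * (∑ u, x u ^ 2 + ∑ v, y v ^ 2) := by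
  have hd' : (0 : ℝ) < d₁ := by exact_mod_cast hd
  obtain ⟨hr, hc⟩ := mem_BBG.1 hX
  set D := √(d₁ : ℝ) with hDdef
  have hD : 0 < D := Real.sqrt_pos.2 hd'
  have hD2 : D ^ 2 = d₁ := Real.sq_sqrt hd'.le
  have pt : ∀ u v, 2 * (x u * y v * ind X u v) ≤
      x u ^ 2 / D * ind X u v + y v ^ 2 * D * ind X u v := by
    intro u v
    have h1 : 2 * (x u * y v) ≤ x u ^ 2 / D + y v ^ 2 * D := by
      rw [div_add' _ _ _ hD.ne', le_div_iff₀ hD]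
      nlinarith [sq_nonneg (x u - y v * D)]
    have := mul_le_mul_of_nonneg_right h1 (ind_nonneg X u v)
    linarith
  simp only [Finset.mul_sum]
  refine (Finset.sum_le_sum fun u _ => Finset.sum_le_sum fun v _ => pt u v).trans ?_
  simp only [Finset.sum_add_distrib]
  have s1 : ∑ u, ∑ v, x u ^ 2 / D * ind X u v = D * ∑ u, x u ^ 2 := by
    simp only [← Finset.mul_sum, hr]
    rw [← Finset.sum_mul, ← Finset.sum_div, ← hD2]
    field_simp
  have s2 : ∑ u, ∑ v, y v ^ 2 * D * ind X u v = D * ∑ v, y v ^ 2 := by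
    rw [Finset.sum_comm]
    simp only [← Finset.mul_sum, hc]
    rw [← Finset.sum_mul, ← Finset.sum_mul]
    push_cast; ring
  rw [s1, s2, mul_add]

def cH (κ : ℝ) : ℝ := 2 + 2 * (288 + 128 * κ)

lemma pair_total {n m d₁ d₂ : ℕ} (hn : 0 < n) (hm : 0 < m) (hd : 0 < d₁) (hd2 : 0 < d₂)
    (hnd : n * d₁ = m * d₂) (h21 : d₂ ≤ d₁) {X : Fin n → Fin m → Bool}
    (hX : X ∈ BBG n m d₁ d₂)
    {κ : ℝ} (hκ : 0 < κ) (hDisc : Disc d₂ κ X)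
    (x : Fin n → ℝ) (y : Fin m → ℝ)
    (hx : ∑ u, x u ^ 2 ≤ 1) (hy : ∑ v, y v ^ 2 ≤ 1)
    (hl : lin (lightQ (√d₁ / m) x y) X ≤ cL * √d₁) :
    ∑ u, ∑ v, x u * y v * ind X u v ≤ (cL + cH κ) * √d₁ := by
  have h1 := heavy_bound hn hm hd hd2 hnd h21 hX hκ hDisc (fun u => |x u|) (fun v => |y v|)
    (fun u => abs_nonneg _) (fun v => abs_nonneg _) (by simpa only [sq_abs] using hx)
    (by simpa only [sq_abs] using hy)
  have pt : ∀ u v, x u * y v * ind X u v ≤ lightQ (√d₁ / m) x y u v * ind X u v +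
      (if √d₁ / m < |x u| * |y v| then |x u| * |y v| * ind X u v else 0) := by
    intro u v
    have hi := ind_nonneg X u v
    unfold lightQ
    rw [abs_mul]
    by_cases h : |x u| * |y v| ≤ √d₁ / m
    · rw [if_pos h, if_neg (not_lt.2 h)]; linarith
    · rw [if_neg h, if_pos (not_le.1 h)]
      have : x u * y v ≤ |x u| * |y v| := by rw [← abs_mul]; exact le_abs_self _
      have := mul_le_mul_of_nonneg_right this hi
      linarith
  refine (Finset.sum_le_sum fun u _ => Finset.sum_le_sum fun v _ => pt u v).trans ?_
  simp only [Finset.sum_add_distrib]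
  have : ∑ u, ∑ v, lightQ (√d₁ / m) x y u v * ind X u v = lin (lightQ (√d₁ / m) x y) X := rfl
  rw [this, add_mul]
  refine add_le_add hl ?_
  unfold cH
  exact h1

lemma arith_d {n d₂ : ℕ} (hn : 0 < n) (h2 : 2 ≤ d₂)
    (h : (d₂ : ℝ) ≤ (1 / 2) * (n : ℝ) ^ ((2 : ℝ) / 3)) : 4 * d₂ ≤ n ∧ d₂ ^ 3 ≤ n ^ 2 := by
  have hn' : (0 : ℝ) < n := by exact_mod_cast hn
  have h3 : (d₂ : ℝ) ^ 3 ≤ (1 / 8) * (n : ℝ) ^ 2 := by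
    calc (d₂ : ℝ) ^ 3 ≤ ((1 / 2) * (n : ℝ) ^ ((2 : ℝ) / 3)) ^ 3 := by gcongr
      _ = (1 / 8) * ((n : ℝ) ^ ((2 : ℝ) / 3)) ^ 3 := by ring
      _ = _ := by
        rw [← Real.rpow_natCast ((n : ℝ) ^ ((2 : ℝ) / 3)) 3, ← Real.rpow_mul hn'.le]
        norm_num
  have h4 : 8 * d₂ ^ 3 ≤ n ^ 2 := by
    have : (8 : ℝ) * (d₂ : ℝ) ^ 3 ≤ (n : ℝ) ^ 2 := by linarith
    exact_mod_cast this
  refine ⟨?_, by omega⟩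
  have h5 : (4 * d₂) ^ 2 ≤ n ^ 2 := by
    calc (4 * d₂) ^ 2 = 8 * (2 * d₂ ^ 2) := by ring
      _ ≤ 8 * (d₂ * d₂ ^ 2) := by gcongr
      _ = 8 * d₂ ^ 3 := by ring
      _ ≤ _ := h4
  exact (Nat.pow_le_pow_iff_left (by norm_num)).1 h5


theorem second_eigenvalue_bound :
    ∀ K : ℝ, 0 < K → ∃ α : ℝ, 0 < α ∧
      ∀ (n m d₁ d₂ : ℕ), 0 < n → 0 < m → 0 < d₁ → 0 < d₂ →
        n * d₁ = m * d₂ → d₂ ≤ d₁ →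
        (d₂ : ℝ) ≤ (1 / 2) * (n : ℝ) ^ ((2 : ℝ) / 3) →
        (BBG n m d₁ d₂).Nonempty →
        (1 : ℝ) - (m : ℝ) ^ (-K) - Real.exp (-(m : ℝ)) ≤
          (((BBG n m d₁ d₂).filter fun X =>
              ∀ (hA : (adj X).IsHermitian)
                (σ : Fin (n + m) ≃ (Fin n ⊕ Fin m)),
                Antitone (fun i => hA.eigenvalues (σ i)) →
                ∀ i : Fin (n + m), (i : ℕ) = 1 →
                  hA.eigenvalues (σ i) ≤ α * Real.sqrt d₁).card : ℝ) /
            ((BBG n m d₁ d₂).card : ℝ) := by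
  intro K hK
  have hκ : 0 < 16 * (K + 4) := by linarith
  have hcH : 0 < cH (16 * (K + 4)) := by unfold cH; positivity
  have hcL : 0 < cL := by unfold cL; positivity
  set τ0 := cL + cH (16 * (K + 4)) with hτ0
  have hτ : 0 < τ0 := by positivity
  refine ⟨4 * τ0 + 1, by positivity, ?_⟩
  intro n m d₁ d₂ hn hm hd hd2 hnd h21 hdn hne
  have hd' : (0 : ℝ) < d₁ := by exact_mod_cast hd
  have hm' : (0 : ℝ) < m := by exact_mod_cast hm
  have hcard : (0 : ℝ) < (BBG n m d₁ d₂).card := by exact_mod_cast hne.card_pos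
  have hD : 0 < √(d₁ : ℝ) := Real.sqrt_pos.2 hd'
  have hmK : 0 ≤ (m : ℝ) ^ (-K) := by positivity
  have hem := Real.exp_pos (-(m : ℝ))
  rw [le_div_iff₀ hcard]
  rcases Nat.lt_or_ge d₂ 2 with h1 | h2
  · have h1 : d₂ = 1 := by omega
    subst h1
    rw [Finset.filter_true_of_mem]
    · nlinarith
    intro X hX hA σ hanti i hi
    have := spectral hn hm hd hd2 hX hD.le (fun x y _ _ => triv_bound hd hX x y) hA σ hanti i hi
    nlinarith
  obtain ⟨h4, hcube⟩ := arith_d hn h2 hdn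
  have hnm : n ≤ m := by
    by_contra h
    push Not at h
    have : m * d₂ < n * d₁ := by
      calc m * d₂ ≤ m * d₁ := by gcongr
        _ < n * d₁ := by gcongr
    omega
  obtain ⟨N, M, hNc, hMc, hN, hM, hnet⟩ := net_main n m
  set G := BBG n m d₁ d₂ with hG
  set good := G.filter fun X =>
              ∀ (hA : (adj X).IsHermitian)
                (σ : Fin (n + m) ≃ (Fin n ⊕ Fin m)),
                Antitone (fun i => hA.eigenvalues (σ i)) →
                ∀ i : Fin (n + m), (i : ℕ) = 1 →
                  hA.eigenvalues (σ i) ≤ (4 * τ0 + 1) * Real.sqrt d₁ with hgood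
  set bad1 := G.filter fun X => ¬ Disc d₂ (16 * (K + 4)) X with hbad1
  set bl : (Fin n → ℝ) × (Fin m → ℝ) → Finset (Fin n → Fin m → Bool) := fun q =>
    G.filter fun X => cL * √d₁ ≤ lin (lightQ (√d₁ / m) q.1 q.2) X with hbl
  have hcover : G ⊆ good ∪ (bad1 ∪ (N ×ˢ M).biUnion bl) := by
    intro X hX
    by_cases hb1 : X ∈ bad1
    · simp [hb1]
    by_cases hb2 : X ∈ (N ×ˢ M).biUnion bl
    · exact Finset.mem_union_right _ (Finset.mem_union_right _ hb2)
    refine Finset.mem_union_left _ ?_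
    rw [hgood, Finset.mem_filter]
    refine ⟨hX, ?_⟩
    have hDisc : Disc d₂ (16 * (K + 4)) X := by
      by_contra h
      exact hb1 (Finset.mem_filter.2 ⟨hX, h⟩)
    have hlight : ∀ c ∈ N, ∀ d ∈ M, lin (lightQ (√d₁ / m) c d) X ≤ cL * √d₁ := by
      intro c hc d hd
      by_contra h
      push Not at h
      exact hb2 (Finset.mem_biUnion.2 ⟨(c, d), Finset.mem_product.2 ⟨hc, hd⟩,
        Finset.mem_filter.2 ⟨hX, h.le⟩⟩)
    intro hA σ hanti i hi
    have hT := hnet (ind X) (τ0 * √d₁) (by positivity) (fun c hc d hd' =>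
      pair_total hn hm hd hd2 hnd h21 hX hκ hDisc c d (hN c hc).2 (hM d hd') (hlight c hc d hd'))
    have := spectral (B := 4 * (τ0 * √d₁)) hn hm hd hd2 hX (by positivity)
      (fun x y hx _ => hT x y hx) hA σ hanti i hi
    linarith
  have hc1 : (G.card : ℝ) ≤ good.card + (bad1.card + ((N ×ˢ M).biUnion bl).card) := by
    have h1 := Finset.card_le_card hcover
    have h2 := Finset.card_union_le good (bad1 ∪ (N ×ˢ M).biUnion bl)
    have h3 := Finset.card_union_le bad1 ((N ×ˢ M).biUnion bl)
    exact_mod_cast (h1.trans h2).trans (by omega)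
  have hb1 : (bad1.card : ℝ) ≤ (m : ℝ) ^ (-K) * G.card :=
    disc_prob hn hm hd hd2 hnm h4 K hK
  have hb2 : (((N ×ˢ M).biUnion bl).card : ℝ) ≤ Real.exp (-(m : ℝ)) * G.card := by
    have e1 : (((N ×ˢ M).biUnion bl).card : ℝ) ≤ ∑ q ∈ N ×ˢ M, ((bl q).card : ℝ) := by
      exact_mod_cast Finset.card_biUnion_le
    have e2 : ∀ q ∈ N ×ˢ M, ((bl q).card : ℝ) ≤ Real.exp (-5 * m) * G.card := by
      intro q hq
      obtain ⟨hq1, hq2⟩ := Finset.mem_product.1 hq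
      exact light_tail hn hm hd hd2 hnd h21 h4 hcube (hN _ hq1).1 (hN _ hq1).2 (hM _ hq2)
    have e3 := e1.trans (Finset.sum_le_sum e2)
    rw [Finset.sum_const, nsmul_eq_mul, Finset.card_product] at e3
    have e4 : ((N.card * M.card : ℕ) : ℝ) ≤ Real.exp (4 * m) := by
      have : N.card * M.card ≤ 25 ^ m := by
        calc N.card * M.card ≤ 5 ^ n * 5 ^ m := Nat.mul_le_mul hNc hMc
          _ ≤ 5 ^ m * 5 ^ m := by gcongr; norm_num
          _ = 25 ^ m := by rw [← mul_pow]; norm_num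
      have h5 : ((N.card * M.card : ℕ) : ℝ) ≤ 25 ^ m := by exact_mod_cast this
      refine h5.trans ?_
      rw [mul_comm, Real.exp_nat_mul]
      gcongr
      have h6 : Real.exp 4 = Real.exp 1 ^ 4 := by rw [← Real.exp_nat_mul]; norm_num
      rw [h6]
      have h7 := Real.exp_one_gt_d9
      calc (25 : ℝ) ≤ 2.7 ^ 4 := by norm_num
        _ ≤ _ := by gcongr; linarith
    calc _ ≤ _ := e3
      _ ≤ Real.exp (4 * m) * (Real.exp (-5 * m) * G.card) := by gcongr
      _ = _ := by rw [← mul_assoc, ← Real.exp_add]; congr 2; ring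
  linarith
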